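/- arXiv:2311.09464 — 2 statements merged into one kernel-verified Lean document; each statement's English description precedes it below -/
import Mathlib

section
/- Assume the Riemann hypothesis. Then for every real x ≥ 1, |ψ₁(x) − x²/2| ≤ (4 + γ)·x^{3/2}; in particular |ψ₁(x) − x²/2| < 5·x^{3/2}. -/
/-- The Riemann hypothesis: every nontrivial zero of ζ (a zero with real part strictly
between 0 and 1) has real part 1/2. -/
def RH : Prop := ∀ s : ℂ, riemannZeta s = 0 → 0 < s.re → s.re < 1 → s.re = 1 / 2

/-- The Chebyshev psi function ψ(x) = ∑_{m ≤ x} Λ(m). -/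
noncomputable def chebyshevPsi (x : ℝ) : ℝ :=
  ∑ m ∈ Finset.Icc 1 ⌊x⌋₊, ArithmeticFunction.vonMangoldt m

/-- ψ₁(x) = ∫₁ˣ ψ(u) du. -/
noncomputable def chebyshevPsi1 (x : ℝ) : ℝ := ∫ u in (1:ℝ)..x, chebyshevPsi u

section
open Complex Filter Topology MeasureTheory


lemma line_norm_bound {σ : ℝ} (hσ : 0 < σ) (t : ℝ) :
    ‖(σ + t * I : ℂ)‖ ^ (-(3/2) : ℝ) ≤ (1/σ + 1) ^ (3/2 : ℝ) * (1 + ‖t‖) ^ (-(3/2) : ℝ) := by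
  have h1 : σ ≤ ‖(σ + t * I : ℂ)‖ := by
    simpa using (le_abs_self _).trans (Complex.abs_re_le_norm (σ + t * I : ℂ))
  have h2 : |t| ≤ ‖(σ + t * I : ℂ)‖ := by
    simpa using (Complex.abs_im_le_norm (σ + t * I : ℂ))
  have hpos : 0 < ‖(σ + t * I : ℂ)‖ := hσ.trans_le h1
  have h3 : 1 + ‖t‖ ≤ (1/σ + 1) * ‖(σ + t * I : ℂ)‖ := by
    have : 1 ≤ 1/σ * ‖(σ + t * I : ℂ)‖ := by
      rw [one_div, inv_mul_eq_div, le_div_iff₀ hσ]; linarith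
    rw [Real.norm_eq_abs]; nlinarith
  have h4 : (1 + ‖t‖) ^ (3/2 : ℝ) ≤ (1/σ + 1) ^ (3/2 : ℝ) * ‖(σ + t * I : ℂ)‖ ^ (3/2 : ℝ) := by
    rw [← Real.mul_rpow (by positivity) (by positivity)]
    exact Real.rpow_le_rpow (by positivity) h3 (by norm_num)
  rw [Real.rpow_neg (by positivity), Real.rpow_neg (by positivity), ← div_eq_mul_inv,
    le_div_iff₀ (by positivity), inv_mul_eq_div, div_le_iff₀ (by positivity)]
  exact h4

lemma line_integrable {f : ℂ → ℂ} {σ C : ℝ} (hσ : 0 < σ)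
    (hc : ∀ t : ℝ, ContinuousAt f (σ + t * I))
    (hb : ∀ t : ℝ, ‖f (σ + t * I)‖ ≤ C * ‖(σ + t * I : ℂ)‖ ^ (-(3/2) : ℝ)) :
    Integrable (fun t : ℝ => f (σ + t * I)) := by
  have hcont : Continuous (fun t : ℝ => f (σ + t * I)) := by
    rw [continuous_iff_continuousAt]
    intro t
    exact ContinuousAt.comp (f := fun t : ℝ => (σ + t * I : ℂ)) (hc t) (by fun_prop)
  have hInt0 : Integrable (fun t : ℝ => |C| * ((1/σ + 1) ^ (3/2 : ℝ) * (1 + ‖t‖) ^ (-(3/2) : ℝ))) := by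
    refine Integrable.const_mul (Integrable.const_mul ?_ _) _
    exact integrable_one_add_norm (by simp; norm_num)
  refine hInt0.mono' hcont.aestronglyMeasurable (ae_of_all _ fun t => ?_)
  refine (hb t).trans ?_
  calc _ ≤ |C| * ‖(σ + t * I : ℂ)‖ ^ (-(3/2) : ℝ) := by gcongr; exact le_abs_self _
    _ ≤ _ := by gcongr; exact line_norm_bound hσ t

lemma tendsto_rpow_neg_three_half (c : ℝ) :
    Tendsto (fun T : ℝ => c * T ^ (-(3/2) : ℝ)) atTop (𝓝 0) := by
  simpa using (tendsto_rpow_neg_atTop (show (0:ℝ) < 3/2 by norm_num)).const_mul c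

lemma shift_line {f : ℂ → ℂ} {σ₁ σ₂ C : ℝ} (h0 : 0 < σ₁) (h12 : σ₁ ≤ σ₂)
    (hf : ∀ s : ℂ, σ₁ ≤ s.re → DifferentiableAt ℂ f s)
    (hb : ∀ s : ℂ, σ₁ ≤ s.re → s.re ≤ σ₂ → ‖f s‖ ≤ C * ‖s‖ ^ (-(3/2) : ℝ)) :
    ∫ t : ℝ, f (σ₁ + t * I) = ∫ t : ℝ, f (σ₂ + t * I) := by
  have i1 : Integrable (fun t : ℝ => f (σ₁ + t * I)) :=
    line_integrable h0 (fun t => (hf _ (by simp)).continuousAt) (fun t => hb _ (by simp) (by simpa))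
  have i2 : Integrable (fun t : ℝ => f (σ₂ + t * I)) :=
    line_integrable (h0.trans_le h12) (fun t => (hf _ (by simpa)).continuousAt)
      (fun t => hb _ (by simpa) (by simp))
  have hC : 0 ≤ C := by
    have := (norm_nonneg _).trans (hb σ₁ (by simp) (by simpa))
    by_contra hneg
    push Not at hneg
    have h3 : 0 < ‖(σ₁:ℂ)‖ ^ (-(3/2) : ℝ) := Real.rpow_pos_of_pos (by simp; exact h0.ne') _
    nlinarith
  have l1 := intervalIntegral_tendsto_integral i1 tendsto_neg_atTop_atBot tendsto_id
  have l2 := intervalIntegral_tendsto_integral i2 tendsto_neg_atTop_atBot tendsto_id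
  have hor : ∀ (e : ℝ → ℝ), (∀ T, |e T| = |T|) →
      Tendsto (fun T : ℝ => ∫ x in σ₁..σ₂, f (x + e T * I)) atTop (𝓝 0) := by
    intro e he
    refine squeeze_zero_norm' ?_ (tendsto_rpow_neg_three_half (C * |σ₂ - σ₁|))
    filter_upwards [eventually_gt_atTop 0] with T hT
    have := intervalIntegral.norm_integral_le_of_norm_le_const (a := σ₁) (b := σ₂)
      (f := fun x : ℝ => f (x + e T * I)) (C := C * T ^ (-(3/2) : ℝ)) ?_
    · calc _ ≤ _ := this
        _ = _ := by ring
    · intro x hx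
      rw [Set.uIoc_of_le h12] at hx
      refine (hb _ (by simpa using hx.1.le) (by simpa using hx.2)).trans ?_
      refine mul_le_mul_of_nonneg_left ?_ hC
      refine Real.rpow_le_rpow_of_nonpos hT ?_ (show (-(3/2) : ℝ) ≤ 0 by norm_num)
      have := Complex.abs_im_le_norm (x + e T * I : ℂ)
      simp [he, abs_of_pos hT] at this
      exact this
  have key : ∀ T : ℝ, (∫ t in (-T)..T, f (σ₂ + t * I)) - (∫ t in (-T)..T, f (σ₁ + t * I)) =
      I * ((∫ x in σ₁..σ₂, f (x + ((-T : ℝ)) * I)) - ∫ x in σ₁..σ₂, f (x + (T : ℝ) * I)) := by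
    intro T
    have hre : ∀ a b : ℝ, ((a:ℂ) + b * I).re = a := by simp
    have him : ∀ a b : ℝ, ((a:ℂ) + b * I).im = b := by simp
    have := Complex.integral_boundary_rect_eq_zero_of_differentiableOn f (σ₁ + (-T : ℝ) * I) (σ₂ + (T:ℝ) * I) ?_
    · rw [hre, hre, him, him] at this
      simp only [smul_eq_mul] at this
      have h2 : ((∫ t in (-T)..T, f (σ₂ + t * I)) - (∫ t in (-T)..T, f (σ₁ + t * I))) * I = 
         (∫ x in σ₁..σ₂, f (x + (T : ℝ) * I)) - (∫ x in σ₁..σ₂, f (x + ((-T : ℝ)) * I)) := by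
        linear_combination this
      have h3 := congrArg (fun z => z * (-I)) h2
      have hI : I * I = -1 := I_mul_I
      linear_combination h3 + ((∫ t in (-T)..T, f (σ₂ + t * I)) - (∫ t in (-T)..T, f (σ₁ + t * I))) * hI
    · intro s hs
      refine (hf s ?_).differentiableWithinAt
      have := hs.1
      rw [hre, hre] at this
      simp [Set.uIcc_of_le h12] at this
      exact this.1
  have l3 : Tendsto (fun T : ℝ => (∫ t in (-T)..T, f (σ₂ + t * I)) - (∫ t in (-T)..T, f (σ₁ + t * I)))
      atTop (𝓝 0) := by
    simp_rw [key]
    have := ((hor (fun T => -T) (by simp)).sub (hor (fun T => T) (by simp))).const_mul I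
    simpa using this
  have := tendsto_nhds_unique (l2.sub l1) l3
  exact (sub_eq_zero.mp this).symm

lemma line_zero {f : ℂ → ℂ} {σ C : ℝ} (h0 : 0 < σ)
    (hf : ∀ s : ℂ, σ ≤ s.re → DifferentiableAt ℂ f s)
    (hb : ∀ s : ℂ, σ ≤ s.re → ‖f s‖ ≤ C * ‖s‖ ^ (-(3/2) : ℝ)) :
    ∫ t : ℝ, f (σ + t * I) = 0 := by
  have hC : 0 ≤ C := by
    have := (norm_nonneg _).trans (hb σ (by simp))
    by_contra hneg
    push Not at hneg
    have h3 : 0 < ‖(σ:ℂ)‖ ^ (-(3/2) : ℝ) := Real.rpow_pos_of_pos (by simp; exact h0.ne') _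
    nlinarith
  have hlim : Tendsto (fun R : ℝ => ∫ t : ℝ, f (R + t * I)) atTop (𝓝 0) := by
    have := tendsto_integral_filter_of_dominated_convergence (μ := volume) (l := (atTop : Filter ℝ))
      (F := fun (R : ℝ) (t : ℝ) => f (R + t * I)) (f := fun _ => (0:ℂ))
      (fun t => C * ((1/σ + 1) ^ (3/2 : ℝ) * (1 + ‖t‖) ^ (-(3/2) : ℝ))) ?_ ?_ ?_ ?_
    · simpa using this
    · filter_upwards [eventually_ge_atTop σ] with R hR
      exact (line_integrable (h0.trans_le hR) (fun t => (hf _ (by simpa)).continuousAt)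
        (fun t => hb _ (by simpa))).aestronglyMeasurable
    · filter_upwards [eventually_ge_atTop σ] with R hR
      refine ae_of_all _ fun t => ?_
      refine (hb _ (by simpa)).trans ?_
      refine mul_le_mul_of_nonneg_left ?_ hC
      refine le_trans ?_ (line_norm_bound h0 t)
      refine Real.rpow_le_rpow_of_nonpos ?_ ?_ (show (-(3/2) : ℝ) ≤ 0 by norm_num)
      · have := Complex.abs_re_le_norm (σ + t * I : ℂ)
        simp at this
        exact (abs_pos.mpr h0.ne').trans_le this
      · simp only [Complex.norm_add_mul_I]
        apply Real.sqrt_le_sqrt; gcongr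
    · refine Integrable.const_mul (Integrable.const_mul ?_ _) _
      exact integrable_one_add_norm (by simp; norm_num)
    · refine ae_of_all _ fun t => ?_
      refine squeeze_zero_norm' ?_ (tendsto_rpow_neg_three_half C)
      filter_upwards [eventually_ge_atTop σ] with R hR
      refine (hb _ (by simpa)).trans ?_
      refine mul_le_mul_of_nonneg_left ?_ hC
      refine Real.rpow_le_rpow_of_nonpos (h0.trans_le hR) ?_ (show (-(3/2) : ℝ) ≤ 0 by norm_num)
      have := Complex.abs_re_le_norm (R + t * I : ℂ)
      simp at this
      exact (le_abs_self _).trans this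
  have heq : (fun R : ℝ => ∫ t : ℝ, f (R + t * I)) =ᶠ[atTop] fun _ => ∫ t : ℝ, f (σ + t * I) := by
    filter_upwards [eventually_ge_atTop σ] with R hR
    exact (shift_line h0 hR hf (fun s h1 _ => hb s h1)).symm
  exact tendsto_nhds_unique (tendsto_const_nhds.congr' heq.symm) hlim


lemma line_nonneg_const {f : ℂ → ℂ} {σ C r : ℝ} (h0 : 0 < σ)
    (hb : ∀ s : ℂ, σ ≤ s.re → ‖f s‖ ≤ C * ‖s‖ ^ r) : 0 ≤ C := by
  have := (norm_nonneg _).trans (hb σ (by simp))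
  by_contra hneg
  push Not at hneg
  have h3 : 0 < ‖(σ:ℂ)‖ ^ r := Real.rpow_pos_of_pos (by simp; exact h0.ne') _
  nlinarith

lemma dslope_bound {g : ℂ → ℂ} {σ C a : ℝ} (h0 : 0 < σ) (ha : 2 * σ ≤ a)
    (hg : ∀ s : ℂ, σ ≤ s.re → DifferentiableAt ℂ g s)
    (hb : ∀ s : ℂ, σ ≤ s.re → ‖g s‖ ≤ C * ‖s‖ ^ (1/2 : ℝ)) :
    ∃ C₂ : ℝ, (∀ s : ℂ, σ ≤ s.re → ‖dslope g a s‖ ≤ C₂ * ‖s‖ ^ (-(1/2) : ℝ)) := by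
  have hC := line_nonneg_const h0 hb
  have hcont : ContinuousOn (dslope g a) (Metric.closedBall (a:ℂ) 1 ∩ {s | σ ≤ s.re}) := by
    intro s hs
    refine ContinuousAt.continuousWithinAt ?_
    by_cases h : s = a
    · subst h
      exact (continuousAt_dslope_same).2 (hg _ hs.2)
    · exact (differentiableAt_dslope_of_ne h).2 (hg s hs.2) |>.continuousAt
  have hcomp : IsCompact (Metric.closedBall (a:ℂ) 1 ∩ {s | σ ≤ s.re}) :=
    (isCompact_closedBall _ _).inter_right (isClosed_le continuous_const continuous_re)
  obtain ⟨M, hM⟩ := hcomp.exists_bound_of_continuousOn hcont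
  set C₁ := (C + ‖g a‖ * σ ^ (-(1/2) : ℝ)) * (1 + a) with hC1
  refine ⟨max (|M| * (a+1) ^ (1/2 : ℝ)) C₁, fun s hs => ?_⟩
  have hspos : 0 < ‖s‖ := h0.trans_le (hs.trans ((le_abs_self _).trans (abs_re_le_norm s)))
  have hσs : σ ≤ ‖s‖ := (hs.trans ((le_abs_self _).trans (abs_re_le_norm s)))
  have hsa : ‖s‖ ≤ ‖s - a‖ + a := by
    have := norm_add_le (s - a) a
    simp only [sub_add_cancel, norm_real, Real.norm_eq_abs, abs_of_pos (show 0 < a by linarith)] at this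
    exact this
  by_cases h : ‖s - a‖ ≤ 1
  · have h1 := hM s ⟨by simpa [dist_eq_norm] using h, hs⟩
    have h2 : 1 ≤ (a+1) ^ (1/2 : ℝ) * ‖s‖ ^ (-(1/2) : ℝ) := by
      rw [Real.rpow_neg hspos.le, ← div_eq_mul_inv, one_le_div (by positivity)]
      exact Real.rpow_le_rpow hspos.le (by linarith) (by norm_num)
    calc _ ≤ |M| * 1 := by rw [mul_one]; exact h1.trans (le_abs_self _)
      _ ≤ |M| * ((a+1) ^ (1/2 : ℝ) * ‖s‖ ^ (-(1/2) : ℝ)) := by gcongr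
      _ = (|M| * (a+1) ^ (1/2 : ℝ)) * ‖s‖ ^ (-(1/2) : ℝ) := by ring
      _ ≤ _ := by gcongr; exact le_max_left _ _
  · push Not at h
    have hne : s ≠ a := by rintro rfl; simp at h; linarith
    rw [dslope_of_ne _ hne, slope_def_field, norm_div]
    have h1 : ‖g s - g a‖ ≤ (C + ‖g a‖ * σ ^ (-(1/2) : ℝ)) * ‖s‖ ^ (1/2 : ℝ) := by
      refine (norm_sub_le _ _).trans ?_
      have h2 : 1 ≤ σ ^ (-(1/2) : ℝ) * ‖s‖ ^ (1/2 : ℝ) := by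
        rw [Real.rpow_neg h0.le, inv_mul_eq_div, one_le_div (by positivity)]
        exact Real.rpow_le_rpow h0.le hσs (by norm_num)
      have := hb s hs
      have h3 : ‖g a‖ * 1 ≤ ‖g a‖ * (σ ^ (-(1/2) : ℝ) * ‖s‖ ^ (1/2 : ℝ)) := by gcongr
      nlinarith
    have h2 : ‖s‖ ≤ (1 + a) * ‖s - a‖ := by nlinarith
    rw [div_le_iff₀ (by linarith)]
    have h3 : ‖s‖ ^ (1/2 : ℝ) = ‖s‖ ^ (-(1/2) : ℝ) * ‖s‖ := by
      rw [← Real.rpow_add_one hspos.ne']; norm_num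
    calc _ ≤ _ := h1
      _ = (C + ‖g a‖ * σ ^ (-(1/2) : ℝ)) * ‖s‖ ^ (-(1/2) : ℝ) * ‖s‖ := by rw [h3]; ring
      _ ≤ (C + ‖g a‖ * σ ^ (-(1/2) : ℝ)) * ‖s‖ ^ (-(1/2) : ℝ) * ((1 + a) * ‖s - a‖) := by gcongr
      _ = C₁ * ‖s‖ ^ (-(1/2) : ℝ) * ‖s - a‖ := by rw [hC1]; ring
      _ ≤ _ := by gcongr; exact le_max_right _ _

lemma norm_le_norm_add_real {s : ℂ} (hs : 0 ≤ s.re) {b : ℝ} (hb : 0 ≤ b) : ‖s‖ ≤ ‖s + b‖ := by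
  rw [← sq_le_sq₀ (norm_nonneg _) (norm_nonneg _), Complex.sq_norm, Complex.sq_norm, normSq_apply, normSq_apply]
  simp
  nlinarith

lemma integral_poisson_kernel {α : ℝ} (hα : 0 < α) :
    Integrable (fun t : ℝ => 2 * α / (α ^ 2 + t ^ 2)) ∧ ∫ t : ℝ, 2 * α / (α ^ 2 + t ^ 2) = 2 * Real.pi := by
  have h : (fun t : ℝ => 2 * α / (α ^ 2 + t ^ 2)) = fun t => 2 / α * (fun u : ℝ => (1 + u^2)⁻¹) (α⁻¹ * t) := by
    funext t
    have : α ^ 2 + t ^ 2 ≠ 0 := by positivity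
    have h2 : 1 + (α⁻¹ * t)^2 ≠ 0 := by positivity
    field_simp
  constructor
  · rw [h]
    exact (integrable_inv_one_add_sq.comp_mul_left' (by positivity)).const_mul _
  · have hc := Measure.integral_comp_mul_left (fun u : ℝ => (1 + u^2)⁻¹) α⁻¹
    rw [h, integral_const_mul, hc, integral_univ_inv_one_add_sq]
    rw [abs_of_pos (by positivity)]
    simp only [inv_inv, smul_eq_mul]
    field_simp

lemma poisson_line {g : ℂ → ℂ} {σ C a : ℝ} (h0 : 0 < σ) (ha : 2 * σ ≤ a)
    (hg : ∀ s : ℂ, σ ≤ s.re → DifferentiableAt ℂ g s)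
    (hb : ∀ s : ℂ, σ ≤ s.re → ‖g s‖ ≤ C * ‖s‖ ^ (1/2 : ℝ)) :
    Integrable (fun t : ℝ => g (σ + t * I) * ((2 * (a - σ) / ((a - σ) ^ 2 + t ^ 2) : ℝ) : ℂ)) ∧
    ∫ t : ℝ, g (σ + t * I) * ((2 * (a - σ) / ((a - σ) ^ 2 + t ^ 2) : ℝ) : ℂ) = 2 * Real.pi * g a := by
  obtain ⟨C₂, hC₂⟩ := dslope_bound h0 ha hg hb
  have hC₂0 : 0 ≤ C₂ := line_nonneg_const h0 hC₂
  set α := a - σ with hα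
  have hαp : 0 < α := by linarith
  set b := a - 2 * σ with hbdef
  have hb0 : 0 ≤ b := by linarith
  let f : ℂ → ℂ := fun s => - dslope g a s * (2 * α) / (s + b)
  have hsb : ∀ s : ℂ, σ ≤ s.re → ‖s‖ ≤ ‖s + b‖ := fun s hs => norm_le_norm_add_real (by linarith) hb0
  have hpos : ∀ s : ℂ, σ ≤ s.re → 0 < ‖s‖ := fun s hs =>
    h0.trans_le (hs.trans ((le_abs_self _).trans (abs_re_le_norm s)))
  have hfd : ∀ s : ℂ, σ ≤ s.re → DifferentiableAt ℂ f s := by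
    intro s hs
    have h1 : DifferentiableAt ℂ (dslope g a) s := by
      by_cases h : s = a
      · subst h
        have hball : Metric.ball (a:ℂ) α ∈ 𝓝 (a:ℂ) := Metric.ball_mem_nhds _ hαp
        have : DifferentiableOn ℂ g (Metric.ball (a:ℂ) α) := by
          intro z hz
          refine (hg z ?_).differentiableWithinAt
          rw [Metric.mem_ball, dist_eq_norm] at hz
          have := (abs_re_le_norm (z - a)).trans_lt hz
          simp at this
          have := (abs_lt.mp this).1
          linarith
        exact ((Complex.differentiableOn_dslope hball).2 this).differentiableAt hball
      · exact (differentiableAt_dslope_of_ne h).2 (hg s hs)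
    have h2 : s + b ≠ 0 := norm_pos_iff.mp ((hpos s hs).trans_le (hsb s hs))
    exact ((h1.neg.mul_const _).div (by fun_prop) h2)
  have hfb : ∀ s : ℂ, σ ≤ s.re → ‖f s‖ ≤ (C₂ * (2 * α)) * ‖s‖ ^ (-(3/2) : ℝ) := by
    intro s hs
    have hp := hpos s hs
    have h1 : ‖f s‖ = ‖dslope g a s‖ * (2 * α) / ‖s + b‖ := by
      simp only [f, norm_div, norm_mul, norm_neg, norm_real, Real.norm_eq_abs, abs_of_pos hαp]
      simp
    have h3 : ‖s‖ ^ (-(3/2) : ℝ) * ‖s‖ = ‖s‖ ^ (-(1/2) : ℝ) := by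
      rw [← Real.rpow_add_one hp.ne']; norm_num
    rw [h1, div_le_iff₀ (hp.trans_le (hsb s hs))]
    calc _ ≤ C₂ * ‖s‖ ^ (-(1/2) : ℝ) * (2 * α) := by gcongr; exact hC₂ s hs
      _ = C₂ * (2 * α) * ‖s‖ ^ (-(3/2) : ℝ) * ‖s‖ := by rw [← h3]; ring
      _ ≤ _ := by gcongr; exact hsb s hs
  have hz := line_zero h0 hfd hfb
  have hi : Integrable (fun t : ℝ => f (σ + t * I)) :=
    line_integrable h0 (fun t => (hfd _ (by simp)).continuousAt) (fun t => hfb _ (by simp))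
  obtain ⟨k1, k2⟩ := integral_poisson_kernel hαp
  have k1' : Integrable (fun t : ℝ => g a * ((2 * α / (α ^ 2 + t ^ 2) : ℝ) : ℂ)) :=
    (k1.ofReal).const_mul _
  have heq : (fun t : ℝ => g (σ + t * I) * ((2 * α / (α ^ 2 + t ^ 2) : ℝ) : ℂ)) =
      fun t : ℝ => f (σ + t * I) + g a * ((2 * α / (α ^ 2 + t ^ 2) : ℝ) : ℂ) := by
    funext t
    have hne : (σ + t * I : ℂ) ≠ a := by
      intro h
      have := congrArg re h
      simp at this
      linarith
    have hne2 : (σ + t * I : ℂ) - a ≠ 0 := sub_ne_zero.mpr hne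
    have h2 : (σ + t * I : ℂ) + b ≠ 0 := norm_pos_iff.mp ((hpos _ (by simp)).trans_le (hsb _ (by simp)))
    have e1 : ((2 * α / (α ^ 2 + t ^ 2) : ℝ) : ℂ) = - (2 * α) / (((σ + t * I : ℂ) - a) * ((σ + t * I : ℂ) + b)) := by
      have : ((σ + t * I : ℂ) - a) * ((σ + t * I : ℂ) + b) = -((α ^ 2 + t ^ 2 : ℝ) : ℂ) := by
        rw [hα, hbdef]; push_cast
        linear_combination (t : ℂ)^2 * I_sq
      rw [this]; push_cast; rw [neg_div_neg_eq]
    rw [e1]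
    simp only [f, dslope_of_ne _ hne, slope_def_field]
    field_simp
    ring
  rw [heq]
  refine ⟨hi.add k1', ?_⟩
  have k3 : ∫ t : ℝ, ((2 * α / (α ^ 2 + t ^ 2) : ℝ) : ℂ) = ((2 * Real.pi : ℝ) : ℂ) := by
    rw [← k2]; exact integral_ofReal
  rw [integral_add hi k1', hz, integral_const_mul, k3]
  push_cast; ring

lemma J_line {g : ℂ → ℂ} {σ C : ℝ} (h0 : 0 < σ)
    (hg : ∀ s : ℂ, σ ≤ s.re → DifferentiableAt ℂ g s)
    (hb : ∀ s : ℂ, σ ≤ s.re → ‖g s‖ ≤ C * ‖s‖ ^ (1/2 : ℝ)) :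
    ∫ t : ℝ, g (σ + t * I) / ((2 * σ - (σ + t * I)) * (2 * σ + 1 - (σ + t * I))) =
      2 * Real.pi * (g (2 * σ : ℝ) - g (2 * σ + 1 : ℝ)) := by
  have hC := line_nonneg_const h0 hb
  obtain ⟨i1, e1⟩ := poisson_line (a := 2 * σ) h0 le_rfl hg hb
  obtain ⟨i2, e2⟩ := poisson_line (a := 2 * σ + 1) h0 (by linarith) hg hb
  let f : ℂ → ℂ := fun s => g s / (s * (s + 1))
  have hpos : ∀ s : ℂ, σ ≤ s.re → 0 < ‖s‖ := fun s hs =>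
    h0.trans_le (hs.trans ((le_abs_self _).trans (abs_re_le_norm s)))
  have hsb : ∀ s : ℂ, σ ≤ s.re → ‖s‖ ≤ ‖s + 1‖ := fun s hs => by
    simpa using norm_le_norm_add_real (s := s) (by linarith) zero_le_one
  have hfd : ∀ s : ℂ, σ ≤ s.re → DifferentiableAt ℂ f s := by
    intro s hs
    refine (hg s hs).div (by fun_prop) (mul_ne_zero (norm_pos_iff.mp (hpos s hs)) ?_)
    exact norm_pos_iff.mp ((hpos s hs).trans_le (hsb s hs))
  have hfb : ∀ s : ℂ, σ ≤ s.re → ‖f s‖ ≤ C * ‖s‖ ^ (-(3/2) : ℝ) := by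
    intro s hs
    have hp := hpos s hs
    have h3 : ‖s‖ ^ (-(3/2) : ℝ) * (‖s‖ * ‖s‖) = ‖s‖ ^ (1/2 : ℝ) := by
      rw [← mul_assoc, ← Real.rpow_add_one hp.ne', ← Real.rpow_add_one hp.ne']; norm_num
    simp only [f, norm_div, norm_mul]
    rw [div_le_iff₀ (mul_pos hp (hp.trans_le (hsb s hs)))]
    calc _ ≤ _ := hb s hs
      _ = C * ‖s‖ ^ (-(3/2) : ℝ) * (‖s‖ * ‖s‖) := by rw [← h3]; ring
      _ ≤ _ := by gcongr; exact hsb s hs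
  have hz := line_zero h0 hfd hfb
  have hi : Integrable (fun t : ℝ => f (σ + t * I)) :=
    line_integrable h0 (fun t => (hfd _ (by simp)).continuousAt) (fun t => hfb _ (by simp))
  have heq : (fun t : ℝ => g (σ + t * I) / ((2 * σ - (σ + t * I)) * (2 * σ + 1 - (σ + t * I)))) =
     fun t : ℝ => (g (σ + t * I) * ((2 * (2 * σ - σ) / ((2 * σ - σ) ^ 2 + t ^ 2) : ℝ) : ℂ) -
       g (σ + t * I) * ((2 * (2 * σ + 1 - σ) / ((2 * σ + 1 - σ) ^ 2 + t ^ 2) : ℝ) : ℂ)) - f (σ + t * I) := by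
    funext t
    have n1 : (σ + t * I : ℂ) ≠ 0 := norm_pos_iff.mp (hpos _ (by simp))
    have n2 : (σ + t * I : ℂ) + 1 ≠ 0 := norm_pos_iff.mp ((hpos _ (by simp)).trans_le (hsb _ (by simp)))
    have n3 : (2 * σ - (σ + t * I) : ℂ) ≠ 0 := by
      intro h; have := congrArg re h; simp at this; linarith
    have n4 : (2 * σ + 1 - (σ + t * I) : ℂ) ≠ 0 := by
      intro h; have := congrArg re h; simp at this; linarith
    have q1 : ((2 * (2 * σ - σ) / ((2 * σ - σ) ^ 2 + t ^ 2) : ℝ) : ℂ) =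
        2 * σ / ((2 * σ - (σ + t * I)) * (σ + t * I)) := by
      have : ((2 * σ - (σ + t * I)) * (σ + t * I) : ℂ) = (((2 * σ - σ) ^ 2 + t ^ 2 : ℝ) : ℂ) := by
        push_cast; linear_combination -(t : ℂ)^2 * I_sq
      rw [this]; push_cast; congr 1; ring
    have q2 : ((2 * (2 * σ + 1 - σ) / ((2 * σ + 1 - σ) ^ 2 + t ^ 2) : ℝ) : ℂ) =
        2 * (σ + 1) / ((2 * σ + 1 - (σ + t * I)) * (σ + t * I + 1)) := by
      have : ((2 * σ + 1 - (σ + t * I)) * (σ + t * I + 1) : ℂ) = (((2 * σ + 1 - σ) ^ 2 + t ^ 2 : ℝ) : ℂ) := by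
        push_cast; linear_combination -(t : ℂ)^2 * I_sq
      rw [this]; push_cast; congr 1; ring
    rw [q1, q2]
    simp only [f]
    generalize (σ + t * I : ℂ) = s at *
    field_simp
    ring
  have i12 : Integrable (fun t : ℝ => g (σ + t * I) * ((2 * (2 * σ - σ) / ((2 * σ - σ) ^ 2 + t ^ 2) : ℝ) : ℂ) -
       g (σ + t * I) * ((2 * (2 * σ + 1 - σ) / ((2 * σ + 1 - σ) ^ 2 + t ^ 2) : ℝ) : ℂ)) := i1.sub i2
  rw [heq, integral_sub i12 hi, integral_sub i1 i2, hz, e1, e2]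
  ring


lemma norm_re_pos {σ : ℝ} (h0 : 0 < σ) {s : ℂ} (hs : σ ≤ s.re) : 0 < ‖s‖ :=
    h0.trans_le (hs.trans ((le_abs_self _).trans (abs_re_le_norm s)))

lemma div_bound {σ C : ℝ} (h0 : 0 < σ) {s z : ℂ} (hs : σ ≤ s.re) (hC : 0 ≤ C) (hz : ‖z‖ ≤ C * ‖s‖ ^ (1/2 : ℝ)) :
    ‖z / (s * (s + 1))‖ ≤ C * ‖s‖ ^ (-(3/2) : ℝ) := by
  have hp := norm_re_pos h0 hs
  have hsb : ‖s‖ ≤ ‖s + 1‖ := by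
    simpa using norm_le_norm_add_real (s := s) (by linarith) zero_le_one
  have h3 : ‖s‖ ^ (-(3/2) : ℝ) * (‖s‖ * ‖s‖) = ‖s‖ ^ (1/2 : ℝ) := by
    rw [← mul_assoc, ← Real.rpow_add_one hp.ne', ← Real.rpow_add_one hp.ne']; norm_num
  simp only [norm_div, norm_mul]
  rw [div_le_iff₀ (mul_pos hp (hp.trans_le hsb))]
  calc _ ≤ _ := hz
    _ = C * ‖s‖ ^ (-(3/2) : ℝ) * (‖s‖ * ‖s‖) := by rw [← h3]; ring
    _ ≤ _ := by gcongr

lemma div_ne {σ : ℝ} (h0 : 0 < σ) {s : ℂ} (hs : σ ≤ s.re) : s * (s + 1) ≠ 0 := by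
  refine mul_ne_zero (norm_pos_iff.mp (norm_re_pos h0 hs)) ?_
  intro h
  have := congrArg re h
  simp at this
  linarith

lemma trick {K : ℂ → ℂ} {σ C x : ℝ} (h0 : 0 < σ) (hx : 1 ≤ x)
    (hK : ∀ s : ℂ, σ ≤ s.re → DifferentiableAt ℂ K s)
    (hb : ∀ s : ℂ, σ ≤ s.re → ‖K s‖ ≤ C * ‖s‖ ^ (1/2 : ℝ))
    (hpos : ∀ s : ℂ, σ ≤ s.re → 0 ≤ (K s).re) :
    |(∫ t : ℝ, K (σ + t * I) * (x : ℂ) ^ ((σ + t * I : ℂ) + 1) / ((σ + t * I) * (σ + t * I + 1))).re / (2 * Real.pi)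
      + x * (K (2 * σ : ℝ)).re - (K (2 * σ + 1 : ℝ)).re| ≤ x ^ (σ + 1) * (K (2 * σ : ℝ)).re / σ := by
  have hC := line_nonneg_const h0 hb
  have hx0 : 0 < x := by linarith
  have hxc : (x : ℂ) ≠ 0 := by exact_mod_cast hx0.ne'
  let g : ℂ → ℂ := fun s => K s * (x : ℂ) ^ (2 * σ + 1 - s)
  have hgd : ∀ s : ℂ, σ ≤ s.re → DifferentiableAt ℂ g s := by
    intro s hs
    refine (hK s hs).mul ?_
    exact DifferentiableAt.const_cpow (by fun_prop) (Or.inl hxc)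
  have hgb : ∀ s : ℂ, σ ≤ s.re → ‖g s‖ ≤ (C * x ^ (σ + 1)) * ‖s‖ ^ (1/2 : ℝ) := by
    intro s hs
    simp only [g, norm_mul, norm_cpow_eq_rpow_re_of_pos hx0]
    have : x ^ (2 * σ + 1 - s : ℂ).re ≤ x ^ (σ + 1) := by
      refine Real.rpow_le_rpow_of_exponent_le hx ?_
      simp; linarith
    calc _ ≤ (C * ‖s‖ ^ (1/2 : ℝ)) * x ^ (σ + 1) := by gcongr; exact hb s hs
      _ = _ := by ring
  have hJ := J_line h0 hgd hgb
  have g1 : g (2 * σ : ℝ) = K (2 * σ : ℝ) * x := by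
    simp only [g]; push_cast
    rw [show (2 * (σ:ℂ) + 1 - 2 * σ) = 1 by ring, cpow_one]
  have g2 : g (2 * σ + 1 : ℝ) = K (2 * σ + 1 : ℝ) := by
    simp only [g]; push_cast
    rw [sub_self, cpow_zero, mul_one]
  rw [g1, g2] at hJ
  let w : ℝ → ℂ := fun t => (x : ℂ) ^ ((σ + t * I : ℂ) + 1) / ((σ + t * I) * (σ + t * I + 1))
  have hcx : ∀ s : ℂ, (starRingEnd ℂ) ((x:ℂ) ^ s) = (x : ℂ) ^ ((starRingEnd ℂ) s) := by
    intro s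
    have := Complex.cpow_conj (x:ℂ) s (by rw [arg_ofReal_of_nonneg hx0.le]; exact Real.pi_ne_zero.symm)
    rw [conj_ofReal] at this
    rw [this]
  have hconjw : ∀ t : ℝ, g (σ + t * I) / ((2 * σ - (σ + t * I)) * (2 * σ + 1 - (σ + t * I)))
      = K (σ + t * I) * (starRingEnd ℂ) (w t) := by
    intro t
    simp only [w, g, map_div₀, map_mul, map_add, hcx, conj_ofReal, conj_I, map_one, mul_div_assoc]
    congr 3
    · ring
    · ring
    · ring
  have hA : ∀ t : ℝ, K (σ + t * I) * (x : ℂ) ^ ((σ + t * I : ℂ) + 1) / ((σ + t * I) * (σ + t * I + 1))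
     = K (σ + t * I) * w t := by intro t; simp only [w, mul_div_assoc]
  simp_rw [hconjw] at hJ
  simp_rw [hA]
  have hre : ∀ t : ℝ, ((σ:ℂ) + t * I).re = σ := by simp
  have i1 : Integrable (fun t : ℝ => K (σ + t * I) * w t) := by
    have := line_integrable (f := fun s => K s * (x:ℂ) ^ (s + 1) / (s * (s + 1))) (C := C * x ^ (σ+1)) h0
      ?_ ?_
    · refine this.congr (ae_of_all _ fun t => ?_)
      simp only [w, mul_div_assoc]
    · intro t
      refine ContinuousAt.div ((hK _ (by simp)).continuousAt.mul ?_) (by fun_prop) (div_ne h0 (by simp))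
      exact (DifferentiableAt.const_cpow (by fun_prop) (Or.inl hxc)).continuousAt
    · intro t
      refine div_bound h0 (by simp) (by positivity) ?_
      rw [norm_mul, norm_cpow_eq_rpow_re_of_pos hx0]
      have : ((σ + t * I : ℂ) + 1).re = σ + 1 := by simp
      rw [this]
      calc _ ≤ (C * ‖(σ + t * I : ℂ)‖ ^ (1/2 : ℝ)) * x ^ (σ + 1) := by gcongr; exact hb _ (by simp)
      _ = _ := by ring
  have i2 : Integrable (fun t : ℝ => K (σ + t * I) * (starRingEnd ℂ) (w t)) := by
    refine i1.congr' ?_ (ae_of_all _ fun t => by simp)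
    have hw : Continuous w := by
      rw [continuous_iff_continuousAt]
      intro t
      refine ContinuousAt.div ?_ (by fun_prop) (div_ne h0 (by simp))
      refine ContinuousAt.const_cpow (by fun_prop) (Or.inl hxc)
    have hKc : Continuous (fun t : ℝ => K (σ + t * I)) := by
      rw [continuous_iff_continuousAt]
      intro t
      exact ContinuousAt.comp (f := fun t : ℝ => (σ + t * I : ℂ)) (hK _ (by simp)).continuousAt (by fun_prop)
    exact (hKc.mul (continuous_conj.comp hw)).aestronglyMeasurable
  obtain ⟨p1, p2⟩ := poisson_line (a := 2 * σ) h0 le_rfl hK hb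
  have hsum : (∫ t : ℝ, K (σ + t * I) * w t).re + (∫ t : ℝ, K (σ + t * I) * (starRingEnd ℂ) (w t)).re
      = ∫ t : ℝ, (K (σ + t * I)).re * (2 * (w t).re) := by
    rw [← Complex.add_re, ← integral_add i1 i2]
    have i12 : Integrable (fun t : ℝ => K (σ + t * I) * w t + K (σ + t * I) * (starRingEnd ℂ) (w t)) := i1.add i2
    have := integral_re (𝕜 := ℂ) i12
    simp only [RCLike.re_eq_complex_re] at this
    rw [← this]
    congr 1
    funext t
    simp
    ring
  have hKre : Integrable (fun t : ℝ => (K (σ + t * I)).re * (2 * (2 * σ - σ) / ((2 * σ - σ) ^ 2 + t ^ 2))) := by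
    refine p1.re.congr (ae_of_all _ fun t => ?_)
    simp only [RCLike.re_eq_complex_re, re_mul_ofReal]
  have hKint : ∫ t : ℝ, (K (σ + t * I)).re * (2 * (2 * σ - σ) / ((2 * σ - σ) ^ 2 + t ^ 2)) =
      2 * Real.pi * (K (2 * σ : ℝ)).re := by
    have := integral_re (𝕜 := ℂ) p1
    simp only [RCLike.re_eq_complex_re, re_mul_ofReal] at this
    rw [this, p2]
    have : (2 * Real.pi * K (2 * σ : ℝ) : ℂ) = ((2 * Real.pi : ℝ) : ℂ) * K (2 * σ : ℝ) := by push_cast; ring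
    rw [this, re_ofReal_mul]
  have hbound : |∫ t : ℝ, (K (σ + t * I)).re * (2 * (w t).re)| ≤
      x ^ (σ + 1) / σ * (2 * Real.pi * (K (2 * σ : ℝ)).re) := by
    rw [← hKint, ← integral_const_mul, ← Real.norm_eq_abs]
    refine norm_integral_le_of_norm_le (hKre.const_mul _) (ae_of_all _ fun t => ?_)
    have hk := hpos (σ + t * I) (by simp)
    have hw : |(w t).re| ≤ x ^ (σ + 1) / (σ ^ 2 + t ^ 2) := by
      refine (abs_re_le_norm _).trans ?_
      simp only [w, norm_div, norm_mul, norm_cpow_eq_rpow_re_of_pos hx0]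
      have e1 : ((σ + t * I : ℂ) + 1).re = σ + 1 := by simp
      rw [e1]
      have hsb : ‖(σ + t * I : ℂ)‖ ≤ ‖(σ + t * I : ℂ) + 1‖ := by
        simpa using norm_le_norm_add_real (s := (σ + t * I : ℂ)) (by simp; linarith) zero_le_one
      have e2 : σ ^ 2 + t ^ 2 = ‖(σ + t * I : ℂ)‖ * ‖(σ + t * I : ℂ)‖ := by
        rw [← sq, Complex.sq_norm, normSq_add_mul_I]
      rw [e2]
      have := norm_re_pos h0 (s := σ + t * I) (by simp)
      gcongr
    rw [Real.norm_eq_abs, abs_mul, abs_of_nonneg hk, abs_mul, abs_two]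
    have hst : 0 < σ ^ 2 + t ^ 2 := by positivity
    calc _ ≤ (K (σ + t * I)).re * (2 * (x ^ (σ + 1) / (σ ^ 2 + t ^ 2))) := by gcongr
      _ = _ := by
        rw [show 2 * σ - σ = σ by ring]
        field_simp
  rw [← hsum, hJ] at hbound
  have e3 : (2 * (Real.pi:ℂ) * (K (2 * σ : ℝ) * x - K (2 * σ + 1 : ℝ))).re =
      2 * Real.pi * ((K (2 * σ : ℝ)).re * x - (K (2 * σ + 1 : ℝ)).re) := by
    rw [show (2 * (Real.pi:ℂ)) = ((2 * Real.pi : ℝ) : ℂ) by push_cast; ring, re_ofReal_mul, sub_re, re_mul_ofReal]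
  rw [e3] at hbound
  have hpi : 0 < 2 * Real.pi := by positivity
  set A := (∫ t : ℝ, K (σ + t * I) * w t).re
  have : A / (2 * Real.pi) + x * (K (2 * σ : ℝ)).re - (K (2 * σ + 1 : ℝ)).re =
     (A + 2 * Real.pi * ((K (2 * σ : ℝ)).re * x - (K (2 * σ + 1 : ℝ)).re)) / (2 * Real.pi) := by
    field_simp
    ring
  rw [this, abs_div, abs_of_pos hpi, div_le_iff₀ hpi]
  refine hbound.trans (le_of_eq ?_)
  ring


noncomputable def fr (x : ℝ) : ℂ := Set.indicator (Set.Ioi (1:ℝ)) (fun x => ((x - ⌊x⌋₊ : ℝ) : ℂ)) x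

lemma fr_bound (x : ℝ) : ‖fr x‖ ≤ Set.indicator (Set.Ioi (1:ℝ)) (fun _ => (1:ℝ)) x := by
  unfold fr
  by_cases h : x ∈ Set.Ioi (1:ℝ)
  · rw [Set.indicator_of_mem h, Set.indicator_of_mem h, norm_real, Real.norm_eq_abs, abs_le]
    have h1 : (1:ℝ) < x := h
    have := Nat.floor_le (show 0 ≤ x by linarith)
    have := Nat.lt_floor_add_one x
    constructor <;> linarith
  · rw [Set.indicator_of_notMem h, Set.indicator_of_notMem h]; simp

lemma fr_measurable : Measurable fr := by
  unfold fr
  refine Measurable.indicator ?_ measurableSet_Ioi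
  refine measurable_ofReal.comp ?_
  exact measurable_id.sub (measurable_from_nat.comp Nat.measurable_floor)

lemma fr_norm_le_one (x : ℝ) : ‖fr x‖ ≤ 1 := by
  refine (fr_bound x).trans ?_
  exact Set.indicator_le_self' (fun _ _ => zero_le_one) x

lemma fr_locallyIntegrable : LocallyIntegrableOn fr (Set.Ioi 0) := by
  refine LocallyIntegrable.locallyIntegrableOn ?_ _
  refine (locallyIntegrable_const (1:ℝ)).mono fr_measurable.aestronglyMeasurable (ae_of_all _ fun x => ?_)
  simpa using fr_norm_le_one x

lemma fr_top : fr =O[atTop] (fun x => x ^ (-(0:ℝ))) := by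
  refine Asymptotics.IsBigO.of_bound 1 (Eventually.of_forall fun x => ?_)
  simpa using fr_norm_le_one x

lemma fr_zero (b : ℝ) : fr =O[𝓝[>] 0] (fun x => x ^ (-b)) := by
  have : fr =ᶠ[𝓝[>] 0] 0 := by
    have : Set.Iio (1:ℝ) ∈ 𝓝[>] (0:ℝ) := mem_nhdsWithin_of_mem_nhds (Iio_mem_nhds one_pos)
    filter_upwards [this] with x hx
    have : x ∉ Set.Ioi (1:ℝ) := by simp; exact le_of_lt hx
    simp [fr, Set.indicator_of_notMem this]
  exact this.trans_isBigO (Asymptotics.isBigO_zero _ _)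

lemma frM_differentiable {s : ℂ} (hs : 0 < s.re) : DifferentiableAt ℂ (fun s => mellin fr (-s)) s := by
  have := mellin_differentiableAt_of_isBigO_rpow (s := -s) (a := 0) (b := -s.re - 1) fr_locallyIntegrable fr_top
    (by simpa using hs) (fr_zero _) (by simp)
  exact DifferentiableAt.comp (f := fun s : ℂ => -s) s this (by fun_prop)

lemma frM_eq (s : ℂ) : mellin fr (-s) = ∫ x in Set.Ioi (1:ℝ), ((x - ⌊x⌋₊ : ℝ) : ℂ) * (x : ℂ) ^ (-(s+1)) := by
  have : ∀ x : ℝ, (x:ℂ) ^ (-s - 1) • fr x =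
      Set.indicator (Set.Ioi (1:ℝ)) (fun x => ((x - ⌊x⌋₊ : ℝ) : ℂ) * (x : ℂ) ^ (-(s+1))) x := by
    intro x
    by_cases h : x ∈ Set.Ioi (1:ℝ)
    · rw [Set.indicator_of_mem h, fr, Set.indicator_of_mem h, smul_eq_mul, mul_comm]
      congr 2; ring
    · rw [Set.indicator_of_notMem h, fr, Set.indicator_of_notMem h, smul_zero]
  unfold mellin
  simp_rw [this]
  rw [setIntegral_indicator measurableSet_Ioi, Set.Ioi_inter_Ioi]
  simp

lemma frM_bound {s : ℂ} (hs : 0 < s.re) : ‖mellin fr (-s)‖ ≤ 1 / s.re := by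
  rw [frM_eq]
  have h1 : ∫ x in Set.Ioi (1:ℝ), x ^ (-s.re - 1) = 1 / s.re := by
    rw [integral_Ioi_rpow_of_lt (by linarith) one_pos]
    rw [sub_add_cancel, Real.one_rpow, neg_div_neg_eq]
  rw [← h1]
  refine norm_integral_le_of_norm_le (integrableOn_Ioi_rpow_of_lt (by linarith) one_pos) ?_
  refine (ae_restrict_iff' measurableSet_Ioi).2 (ae_of_all _ fun x hx => ?_)
  have hx1 : (1:ℝ) < x := hx
  rw [norm_mul, norm_cpow_eq_rpow_re_of_pos (by linarith)]
  have h2 := fr_norm_le_one x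
  rw [fr, Set.indicator_of_mem hx] at h2
  have : (-(s+1)).re = -s.re - 1 := by simp; ring
  rw [this]
  have h3 : 0 ≤ x ^ (-s.re - 1) := Real.rpow_nonneg (by linarith) _
  nlinarith

lemma zeta_integral {s : ℂ} (hs : 1 < s.re) : riemannZeta₁ s = s - s * (s - 1) * mellin fr (-s) := by
  have hs1 : s ≠ 1 := by rintro rfl; simp at hs
  have hs1' : s - 1 ≠ 0 := sub_ne_zero.mpr hs1
  have h1 := LSeries_eq_mul_integral (1 : ℕ → ℂ) (r := 1) zero_le_one hs
    (LSeriesSummable_one_iff.mpr hs) ?_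
  · rw [LSeries_one_eq_riemannZeta hs] at h1
    have h2 := riemannZeta_eq_inv_sub_mul hs1
    have h3 : riemannZeta₁ s = (s - 1) * riemannZeta s := by
      rw [h2]; field_simp
    rw [h3, h1, frM_eq]
    have i1 : IntegrableOn (fun t : ℝ => (t:ℂ) ^ (-s)) (Set.Ioi 1) :=
      integrableOn_Ioi_cpow_of_lt (by simpa using hs) one_pos
    have e1 : ∫ t in Set.Ioi (1:ℝ), (t:ℂ) ^ (-s) = 1 / (s - 1) := by
      rw [integral_Ioi_cpow_of_lt (by simpa using hs) one_pos]
      simp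
      rw [neg_div, ← div_neg, one_div]; congr 1; ring
    have i2 : IntegrableOn (fun t : ℝ => ((t - ⌊t⌋₊ : ℝ) : ℂ) * (t : ℂ) ^ (-(s+1))) (Set.Ioi 1) := by
      refine Integrable.mono' (g := fun t : ℝ => t ^ (-s.re - 1)) (integrableOn_Ioi_rpow_of_lt (by linarith) one_pos) ?_ ?_
      · refine Measurable.aestronglyMeasurable ?_
        refine (measurable_ofReal.comp (measurable_id.sub (measurable_from_nat.comp Nat.measurable_floor))).mul ?_
        exact (measurable_ofReal.pow_const _)
      · refine (ae_restrict_iff' measurableSet_Ioi).2 (ae_of_all _ fun x hx => ?_)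
        have hx1 : (1:ℝ) < x := hx
        rw [norm_mul, norm_cpow_eq_rpow_re_of_pos (by linarith)]
        have h2 := fr_norm_le_one x
        rw [fr, Set.indicator_of_mem hx] at h2
        have : (-(s+1)).re = -s.re - 1 := by simp; ring
        rw [this]
        have h3 : 0 ≤ x ^ (-s.re - 1) := Real.rpow_nonneg (by linarith) _
        nlinarith
    have e2 : ∫ t in Set.Ioi (1 : ℝ), (∑ k ∈ Finset.Icc 1 ⌊t⌋₊, (1 : ℕ → ℂ) k) * t ^ (-(s + 1)) =
       (∫ t in Set.Ioi (1:ℝ), (t:ℂ) ^ (-s)) - ∫ t in Set.Ioi (1:ℝ), ((t - ⌊t⌋₊ : ℝ) : ℂ) * (t : ℂ) ^ (-(s+1)) := by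
      rw [← integral_sub i1 i2]
      refine setIntegral_congr_fun measurableSet_Ioi fun t ht => ?_
      have ht0 : (t:ℂ) ≠ 0 := by
        have : (1:ℝ) < t := ht
        exact_mod_cast (by linarith : t ≠ 0)
      have : (t:ℂ) ^ (-s) = t * (t:ℂ) ^ (-(s+1)) := by
        rw [show -s = 1 + -(s+1) by ring, cpow_add _ _ ht0, cpow_one]
      simp only [Pi.one_apply, Finset.sum_const, Nat.card_Icc, this]
      push_cast
      simp
      ring
    rw [e2, e1]
    field_simp
  · refine Asymptotics.IsBigO.of_bound 1 (Eventually.of_forall fun n => ?_)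
    simp

lemma Z_formula {s : ℂ} (hs : 0 < s.re) : riemannZeta₁ s = s - s * (s - 1) * mellin fr (-s) := by
  have hopen : IsOpen {s : ℂ | 0 < s.re} := isOpen_lt continuous_const continuous_re
  have hconv : Convex ℝ {s : ℂ | 0 < s.re} := convex_halfSpace_re_gt 0
  have h1 : AnalyticOnNhd ℂ riemannZeta₁ {s : ℂ | 0 < s.re} :=
    (differentiable_riemannZeta₁.differentiableOn).analyticOnNhd hopen
  have h2 : AnalyticOnNhd ℂ (fun s => s - s * (s - 1) * mellin fr (-s)) {s : ℂ | 0 < s.re} := by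
    refine DifferentiableOn.analyticOnNhd (fun s hs => ?_) hopen
    have := frM_differentiable hs
    refine DifferentiableAt.differentiableWithinAt ?_
    exact (differentiableAt_id).sub (DifferentiableAt.mul (by fun_prop) this)
  have := h1.eqOn_of_preconnected_of_eventuallyEq h2 hconv.isPreconnected (z₀ := 2) (by simp) ?_
  · exact this hs
  · have : {s : ℂ | 1 < s.re} ∈ 𝓝 (2:ℂ) := (isOpen_lt continuous_const continuous_re).mem_nhds (by simp)
    filter_upwards [this] with s hs
    exact zeta_integral hs

lemma Z_bound {s : ℂ} (hs : 1/4 ≤ s.re) : ‖riemannZeta₁ s‖ ≤ 9 * (1 + ‖s‖) ^ 2 := by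
  have h0 : 0 < s.re := by linarith
  rw [Z_formula h0]
  have h1 := frM_bound h0
  have h2 : 1 / s.re ≤ 4 := by rw [div_le_iff₀ h0]; linarith
  have h3 : ‖s - 1‖ ≤ ‖s‖ + 1 := by simpa using norm_sub_le s 1
  calc _ ≤ ‖s‖ + ‖s‖ * ‖s - 1‖ * ‖mellin fr (-s)‖ := by
        refine (norm_sub_le _ _).trans ?_
        rw [norm_mul, norm_mul]
    _ ≤ ‖s‖ + ‖s‖ * (‖s‖ + 1) * 4 := by gcongr; exact h1.trans h2
    _ ≤ _ := by nlinarith [norm_nonneg s]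

lemma Z_eq {s : ℂ} (hs : s ≠ 1) : riemannZeta₁ s = (s - 1) * riemannZeta s := by
  have hs1' : s - 1 ≠ 0 := sub_ne_zero.mpr hs
  rw [riemannZeta_eq_inv_sub_mul hs]; field_simp

lemma Z_lower : ∃ c : ℝ, 0 < c ∧ ∀ s : ℂ, 2 ≤ s.re → c ≤ ‖riemannZeta₁ s‖ := by
  refine ⟨2 - Real.pi ^ 2 / 6, ?_, ?_⟩
  · have := Real.pi_lt_d2; have := Real.pi_pos; nlinarith
  · intro s hs
    have hs1 : s ≠ 1 := by rintro rfl; simp at hs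
    have hs1r : 1 < s.re := by linarith
    rw [Z_eq hs1, norm_mul]
    have h1 : 1 ≤ ‖s - 1‖ := by
      have := (le_abs_self _).trans (abs_re_le_norm (s - 1))
      simp at this; linarith
    have h2 : 2 - Real.pi ^ 2 / 6 ≤ ‖riemannZeta s‖ := by
      have hz := hasSum_zeta_two
      have hsum : Summable fun n : ℕ => 1 / ((n:ℂ) + 1) ^ s := by
        have := (summable_nat_add_iff 1).mpr (Complex.summable_one_div_nat_cpow.mpr hs1r)
        simpa using this
      rw [zeta_eq_tsum_one_div_nat_add_one_cpow hs1r, hsum.tsum_eq_zero_add]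
      have hz1 : HasSum (fun n : ℕ => 1 / ((n:ℝ) + 2) ^ 2) (Real.pi ^ 2 / 6 - 1) := by
        have := (hasSum_nat_add_iff' 2).mpr hz
        simpa [Finset.sum_range_succ] using this
      have hb : ‖∑' n : ℕ, 1 / (((n + 1 : ℕ):ℂ) + 1) ^ s‖ ≤ Real.pi ^ 2 / 6 - 1 := by
        refine tsum_of_norm_bounded hz1 fun n => ?_
        rw [norm_div, norm_one]
        have e : (((n + 1 : ℕ):ℂ) + 1) = ((n + 2 : ℝ) : ℂ) := by push_cast; ring
        rw [e, norm_cpow_eq_rpow_re_of_pos (by positivity), ← Real.rpow_two]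
        have hn : (1:ℝ) ≤ n + 2 := by linarith [(Nat.cast_nonneg n : (0:ℝ) ≤ n)]
        gcongr
      have := norm_sub_norm_le (1:ℂ) (-∑' n : ℕ, 1 / (((n + 1 : ℕ):ℂ) + 1) ^ s)
      simp only [norm_neg, sub_neg_eq_add, norm_one] at this
      simp only [CharP.cast_eq_zero, zero_add, one_cpow, div_one]
      linarith
    nlinarith [norm_nonneg (riemannZeta s)]


lemma log_lemma {F : ℂ → ℂ} {R M r ρ : ℝ} {w : ℂ} (hF : DifferentiableOn ℂ F (Metric.ball 0 R))
    (hne : ∀ z ∈ Metric.ball (0:ℂ) R, F z ≠ 0) (hM : 0 < M)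
    (hb : ∀ z ∈ Metric.ball (0:ℂ) R, ‖F z‖ ≤ Real.exp M * ‖F 0‖)
    (hr : 0 ≤ r) (hw : ‖w‖ ≤ r) (hρ : 0 < ρ) (hR : r + ρ < R) :
    ‖logDeriv F w‖ ≤ 2 * M * (r + ρ) / (R - (r + ρ)) / ρ ∧
    ‖F 0‖ * Real.exp (-(2 * M * r / (R - r))) ≤ ‖F w‖ := by
  have hR0 : 0 < R := by linarith
  have h0 : (0:ℂ) ∈ Metric.ball (0:ℂ) R := Metric.mem_ball_self hR0
  have hlog : DifferentiableOn ℂ (logDeriv F) (Metric.ball 0 R) := by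
    have h1 : DifferentiableOn ℂ (deriv F) (Metric.ball 0 R) := hF.deriv Metric.isOpen_ball
    exact h1.div hF hne
  obtain ⟨g, hg⟩ := hlog.isExactOn_ball
  let L : ℂ → ℂ := fun z => g z - g 0
  have hL : ∀ z ∈ Metric.ball (0:ℂ) R, HasDerivAt L (logDeriv F z) z := fun z hz => (hg z hz).sub_const _
  have hL0 : L 0 = 0 := by simp [L]
  have hFL : ∀ z ∈ Metric.ball (0:ℂ) R, F z * exp (-L z) = F 0 := by
    intro z hz
    have hd : ∀ y ∈ Metric.ball (0:ℂ) R, HasDerivAt (fun z => F z * exp (-L z)) 0 y := by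
      intro y hy
      have a1 : HasDerivAt F (deriv F y) y :=
        (hF.differentiableAt (Metric.isOpen_ball.mem_nhds hy)).hasDerivAt
      have := a1.mul ((hL y hy).neg.cexp)
      refine this.congr_deriv ?_
      rw [logDeriv_apply]
      have := hne y hy
      field_simp
      ring
    have := Metric.isOpen_ball.is_const_of_deriv_eq_zero (convex_ball (0:ℂ) R).isPreconnected
      (f := fun z => F z * exp (-L z)) (fun y hy => (hd y hy).differentiableAt.differentiableWithinAt)
      (fun y hy => (hd y hy).deriv) hz h0
    simpa [hL0] using this
  have hF0 : 0 < ‖F 0‖ := norm_pos_iff.mpr (hne 0 h0)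
  have hnorm : ∀ z ∈ Metric.ball (0:ℂ) R, ‖F z‖ = ‖F 0‖ * Real.exp (L z).re := by
    intro z hz
    rw [← hFL z hz, norm_mul, norm_exp, mul_assoc, ← Real.exp_add]
    simp
  have hBC : ∀ z ∈ Metric.ball (0:ℂ) R, ‖L z‖ ≤ 2 * M * ‖z‖ / (R - ‖z‖) := by
    intro z hz
    refine Complex.borelCaratheodory_zero hM
      (fun y hy => (hL y hy).differentiableAt.differentiableWithinAt) ?_ hR0 hz hL0
    intro y hy
    have h1 := hb y hy
    rw [hnorm y hy, mul_comm] at h1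
    exact Real.exp_le_exp.mp (le_of_mul_le_mul_right h1 hF0)
  have hBC' : ∀ a : ℝ, 0 ≤ a → a < R → ∀ z : ℂ, ‖z‖ ≤ a → ‖L z‖ ≤ 2 * M * a / (R - a) := by
    intro a ha haR z hz
    refine (hBC z (by simpa using hz.trans_lt haR)).trans ?_
    have : 0 < R - a := by linarith
    gcongr
  constructor
  · have hsub : Metric.closedBall w ρ ⊆ Metric.ball 0 R := by
      intro z hz
      have h1 : ‖z - w‖ ≤ ρ := by simpa [dist_eq_norm] using hz
      have h2 : ‖z‖ ≤ ‖z - w‖ + ‖w‖ := by simpa using norm_add_le (z - w) w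
      simp; linarith
    have hwR : w ∈ Metric.ball (0:ℂ) R := by simp; linarith
    rw [← (hL w hwR).deriv]
    refine norm_deriv_le_of_forall_mem_sphere_norm_le hρ ?_ ?_
    · refine DifferentiableOn.diffContOnCl ?_
      intro y hy
      refine (hL y (hsub ?_)).differentiableAt.differentiableWithinAt
      rwa [closure_ball _ hρ.ne'] at hy
    · intro z hz
      refine hBC' _ (by linarith) hR z ?_
      have h1 : ‖z - w‖ = ρ := by simpa [dist_eq_norm] using hz
      have h2 : ‖z‖ ≤ ‖z - w‖ + ‖w‖ := by simpa using norm_add_le (z - w) w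
      linarith
  · rw [hnorm w (by simp; linarith)]
    gcongr
    have := hBC' r hr (by linarith) w hw
    have h2 := (abs_le.mp ((abs_re_le_norm (L w)).trans this)).1
    exact h2

lemma Z_ne_zero (hRH : ∀ s : ℂ, riemannZeta s = 0 → 0 < s.re → s.re < 1 → s.re = 1/2)
    {s : ℂ} (hs : 1/2 < s.re) : riemannZeta₁ s ≠ 0 := by
  by_cases h : s = 1
  · rw [h, riemannZeta₁_one]; exact one_ne_zero
  rw [Z_eq h]
  refine mul_ne_zero (sub_ne_zero.mpr h) ?_
  by_cases h1 : 1 ≤ s.re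
  · exact riemannZeta_ne_zero_of_one_le_re h1
  · intro h2
    push Not at h1
    have := hRH s h2 (by linarith) h1
    linarith

lemma H_bounds (hRH : ∀ s : ℂ, riemannZeta s = 0 → 0 < s.re → s.re < 1 → s.re = 1/2)
    {σ : ℝ} (hσ : 1/2 < σ) (hσ1 : σ ≤ 1) :
    ∃ C : ℝ, 0 ≤ C ∧ ∀ s : ℂ, σ ≤ s.re → ‖logDeriv riemannZeta₁ s‖ ≤ C * ‖s‖ ^ (1/2 : ℝ) ∧
      Real.exp (-(C * (1 + ‖s‖))) ≤ ‖riemannZeta₁ s‖ := by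
  obtain ⟨c, hc, hlow⟩ := Z_lower
  set δ := σ - 1/2 with hδ
  have hδ0 : 0 < δ := by linarith
  set A := 9 / c + 1 with hA
  have hA1 : 1 < A := by have : 0 < 9 / c := by positivity
                         linarith
  set B := A * 100 with hB
  have key : ∀ s : ℂ, σ ≤ s.re → ∃ M : ℝ, 0 < M ∧ M ≤ 4 * B ^ (1/4 : ℝ) * ‖s‖ ^ (1/2 : ℝ) ∧
      ‖logDeriv riemannZeta₁ s‖ ≤ 2 * M * (3/2 + δ/2) / (3/2 + δ - (3/2 + δ/2)) / (δ/2) ∧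
      c * Real.exp (-(2 * M * (3/2) / (3/2 + δ - (3/2)))) ≤ ‖riemannZeta₁ s‖ := by
    intro s hs
    have hs12 : 1/2 ≤ ‖s‖ := by
      have := (le_abs_self _).trans (abs_re_le_norm s); linarith
    have hBs : 1 < B * ‖s‖ ^ 2 := by nlinarith
    have hBs0 : 0 < B * ‖s‖ ^ 2 := by linarith
    refine ⟨Real.log (B * ‖s‖ ^ 2), Real.log_pos hBs, ?_, ?_⟩
    · refine (Real.log_le_rpow_div hBs0.le (show (0:ℝ) < 1/4 by norm_num)).trans ?_
      rw [Real.mul_rpow (by positivity) (by positivity), ← Real.rpow_natCast, ← Real.rpow_mul (by positivity)]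
      norm_num
      linarith
    · have hcre : 2 ≤ (s + 3/2).re := by
        have : (3/2 : ℂ).re = 3/2 := by norm_num
        rw [add_re, this]; linarith
      have hre : ∀ z ∈ Metric.ball (0:ℂ) (3/2 + δ), 1/2 < (s + 3/2 + z).re := by
        intro z hz
        have h1 : ‖z‖ < 3/2 + δ := by simpa using hz
        have h2 := (abs_le.mp (abs_re_le_norm z)).1
        have : (3/2 : ℂ).re = 3/2 := by norm_num
        rw [add_re, add_re, this]; linarith
      have n32 : ‖(3/2 : ℂ)‖ = 3/2 := by norm_num
      have := log_lemma (F := fun z => riemannZeta₁ (s + 3/2 + z)) (R := 3/2 + δ) (M := Real.log (B * ‖s‖ ^ 2))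
        (r := 3/2) (ρ := δ/2) (w := -(3/2))
        (fun z _ => (differentiable_riemannZeta₁.comp (by fun_prop)).differentiableAt.differentiableWithinAt)
        (fun z hz => Z_ne_zero hRH (hre z hz)) (Real.log_pos hBs) ?_ (by norm_num)
        (by rw [norm_neg, n32]) (by linarith) (by linarith)
      · have e : s + 3/2 + -(3/2) = s := by ring
        have hld : logDeriv (fun z => riemannZeta₁ (s + 3/2 + z)) (-(3/2)) = logDeriv riemannZeta₁ s := by
          rw [logDeriv_apply, logDeriv_apply, deriv_comp_const_add, e]
        rw [hld] at this
        simp only [e, add_zero] at this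
        refine ⟨this.1, le_trans ?_ this.2⟩
        gcongr
        exact hlow _ hcre
      · intro z hz
        rw [Real.exp_log hBs0, add_zero]
        have h1 : ‖z‖ < 3/2 + δ := by simpa using hz
        have h2 : ‖s + 3/2 + z‖ ≤ ‖s‖ + 3/2 + ‖z‖ := (norm_add_le _ _).trans
          (by gcongr; exact (norm_add_le _ _).trans (by rw [n32]))
        have h3 := Z_bound (s := s + 3/2 + z) (by linarith [hre z hz])
        have h4 := hlow _ hcre
        calc _ ≤ _ := h3
          _ ≤ 9 * (10 * ‖s‖) ^ 2 := by gcongr; linarith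
          _ = (9 / c) * (100 * ‖s‖ ^ 2) * c := by field_simp; ring
          _ ≤ A * (100 * ‖s‖ ^ 2) * ‖riemannZeta₁ (s + 3 / 2)‖ := by gcongr; linarith
          _ = _ := by rw [hB]; ring
  set D := 4 * B ^ (1/4 : ℝ) with hD
  have hD0 : 0 ≤ D := by positivity
  set C1 := 2 * D * (3/2 + δ/2) / (3/2 + δ - (3/2 + δ/2)) / (δ/2) with hC1
  set C2 := 2 * D * (3/2) / (3/2 + δ - (3/2)) with hC2
  have p1 : 0 < 3/2 + δ - (3/2 + δ/2) := by linarith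
  have p2 : 0 < 3/2 + δ - (3/2) := by linarith
  have hC10 : 0 ≤ C1 := by positivity
  have hC20 : 0 ≤ C2 := by positivity
  refine ⟨C1 + C2 + |Real.log c|, by positivity, fun s hs => ?_⟩
  obtain ⟨M, hM0, hM, h1, h2⟩ := key s hs
  have hsr : 0 ≤ ‖s‖ ^ (1/2 : ℝ) := by positivity
  constructor
  · refine h1.trans ?_
    calc _ ≤ 2 * (D * ‖s‖ ^ (1/2 : ℝ)) * (3/2 + δ/2) / (3/2 + δ - (3/2 + δ/2)) / (δ/2) := by gcongr
      _ = C1 * ‖s‖ ^ (1/2 : ℝ) := by rw [hC1]; ring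
      _ ≤ _ := by gcongr; have := abs_nonneg (Real.log c); linarith
  · refine le_trans ?_ h2
    nth_rewrite 2 [← Real.exp_log hc]
    rw [← Real.exp_add]
    apply Real.exp_le_exp.mpr
    have h3 : 2 * M * (3/2) / (3/2 + δ - (3/2)) ≤ C2 * ‖s‖ ^ (1/2 : ℝ) := by
      calc _ ≤ 2 * (D * ‖s‖ ^ (1/2 : ℝ)) * (3/2) / (3/2 + δ - (3/2)) := by gcongr
        _ = _ := by rw [hC2]; ring
    have h4 : ‖s‖ ^ (1/2 : ℝ) ≤ 1 + ‖s‖ := by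
      calc _ ≤ (1 + ‖s‖) ^ (1/2 : ℝ) := by
            refine Real.rpow_le_rpow (norm_nonneg _) (by linarith) (by norm_num)
        _ ≤ (1 + ‖s‖) ^ (1 : ℝ) := Real.rpow_le_rpow_of_exponent_le (by linarith [norm_nonneg s]) (by norm_num)
        _ = _ := Real.rpow_one _
    have h5 : C2 * ‖s‖ ^ (1/2 : ℝ) ≤ C2 * (1 + ‖s‖) := by gcongr
    have h6 := neg_abs_le (Real.log c)
    have h7 := abs_nonneg (Real.log c)
    have h8 := norm_nonneg s
    nlinarith [mul_nonneg h7 h8, mul_nonneg hC10 h8]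


lemma norm_exp_sub_one_le' {z : ℂ} (h : z.re ≤ 0) : ‖exp z - 1‖ ≤ ‖z‖ := by
  have := Convex.norm_image_sub_le_of_norm_deriv_le (f := Complex.exp) (s := {z : ℂ | z.re ≤ 0}) (C := 1)
    (x := 0) (y := z) (fun x _ => Complex.differentiableAt_exp) ?_ (convex_halfSpace_re_le 0) (by simp) h
  · simpa using this
  · intro x hx
    rw [Complex.deriv_exp, norm_exp]
    simpa using hx

lemma norm_tpow_le {w : ℂ} (hw : 0 ≤ w.re) {t : ℝ} (ht : 0 < t) (ht1 : t ≤ 1) : ‖(t:ℂ) ^ w‖ ≤ 1 := by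
  rw [norm_cpow_eq_rpow_re_of_pos ht]
  exact Real.rpow_le_one ht.le ht1 hw

lemma one_sub_tpow_bound {w : ℂ} (hw : 0 ≤ w.re) {t : ℝ} (ht : 0 < t) (ht1 : t < 1) :
    ‖1 - (t:ℂ) ^ w‖ ≤ (2 * ‖w‖) ^ (1/2 : ℝ) * (t ^ (-(1/2) : ℝ) * (1 - t) ^ (1/2 : ℝ)) := by
  have h1 : ‖1 - (t:ℂ) ^ w‖ ≤ 2 := by
    refine (norm_sub_le _ _).trans ?_
    have := norm_tpow_le hw ht ht1.le
    rw [norm_one]; linarith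
  have hlog : -Real.log t ≤ (1 - t) / t := by
    have := Real.one_sub_inv_le_log_of_pos ht
    have e : (1 - t) / t = t⁻¹ - 1 := by field_simp
    rw [e]; linarith
  have hlog0 : 0 ≤ -Real.log t := by have := Real.log_nonpos ht.le ht1.le; linarith
  have h2 : ‖1 - (t:ℂ) ^ w‖ ≤ ‖w‖ * ((1 - t) / t) := by
    have htc : (t:ℂ) ≠ 0 := by exact_mod_cast ht.ne'
    rw [norm_sub_rev, cpow_def_of_ne_zero htc, ← ofReal_log ht.le]
    refine (norm_exp_sub_one_le' ?_).trans ?_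
    · rw [re_ofReal_mul]; nlinarith
    · rw [norm_mul, norm_real, Real.norm_eq_abs, abs_of_nonpos (by linarith), mul_comm]
      gcongr
  have h3 : ‖1 - (t:ℂ) ^ w‖ ^ 2 ≤ (2 * ‖w‖) * ((1 - t) / t) := by
    nlinarith [norm_nonneg (1 - (t:ℂ) ^ w)]
  have h4 : (2 * ‖w‖) ^ (1/2 : ℝ) * (t ^ (-(1/2) : ℝ) * (1 - t) ^ (1/2 : ℝ)) =
      ((2 * ‖w‖) * ((1 - t) / t)) ^ (1/2 : ℝ) := by
    rw [Real.mul_rpow (by positivity) (div_nonneg (by linarith) ht.le), Real.div_rpow (by linarith) ht.le,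
      Real.rpow_neg ht.le]
    ring
  rw [h4, ← Real.sqrt_eq_rpow]
  exact Real.le_sqrt_of_sq_le h3

lemma beta_half_int : IntervalIntegrable (fun t : ℝ => ‖(t:ℂ) ^ ((1/2 : ℂ) - 1) * (1 - (t:ℂ)) ^ ((1/2:ℂ) - 1)‖) volume 0 1 :=
  (betaIntegral_convergent (by norm_num) (by norm_num)).norm

noncomputable def Kb : ℝ := ∫ t in (0:ℝ)..1, ‖(t:ℂ) ^ ((1/2 : ℂ) - 1) * (1 - (t:ℂ)) ^ ((1/2:ℂ) - 1)‖

lemma Kb_nonneg : 0 ≤ Kb := intervalIntegral.integral_nonneg zero_le_one (fun _ _ => norm_nonneg _)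

lemma beta_diff_eq {w : ℂ} (hw : 0 ≤ w.re) {δ : ℝ} (hδ : 0 < δ) :
    IntervalIntegrable (fun t : ℝ => (1 - (t:ℂ) ^ w) * (((1 - t) ^ (δ - 1) : ℝ) : ℂ)) volume 0 1 ∧
    betaIntegral 1 δ - betaIntegral (1 + w) δ = ∫ t in (0:ℝ)..1, (1 - (t:ℂ) ^ w) * (((1 - t) ^ (δ - 1) : ℝ) : ℂ) := by
  have i1 := betaIntegral_convergent (u := 1) (v := δ) (by simp) (by simpa)
  have i2 := betaIntegral_convergent (u := 1 + w) (v := δ) (by simp; linarith) (by simpa)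
  have heq : ∀ t ∈ Set.uIoc (0:ℝ) 1, (t:ℂ) ^ ((1:ℂ) - 1) * (1 - (t:ℂ)) ^ ((δ:ℂ) - 1) -
      (t:ℂ) ^ ((1:ℂ) + w - 1) * (1 - (t:ℂ)) ^ ((δ:ℂ) - 1) = (1 - (t:ℂ) ^ w) * (((1 - t) ^ (δ - 1) : ℝ) : ℂ) := by
    intro t ht
    rw [Set.uIoc_of_le zero_le_one] at ht
    rw [ofReal_cpow (by linarith [ht.2])]
    push_cast
    rw [sub_self, cpow_zero, add_sub_cancel_left]
    ring
  constructor
  · refine (i1.sub i2).congr fun t ht => ?_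
    exact heq t ht
  · unfold betaIntegral
    rw [← intervalIntegral.integral_sub i1 i2]
    refine intervalIntegral.integral_congr_ae (ae_of_all _ fun t ht => heq t ht)

lemma beta_diff_bound {w : ℂ} (hw : 0 ≤ w.re) {δ : ℝ} (hδ : 0 < δ) :
    0 ≤ (betaIntegral 1 δ - betaIntegral (1 + w) δ).re ∧
    ‖betaIntegral 1 δ - betaIntegral (1 + w) δ‖ ≤ (2 * ‖w‖) ^ (1/2 : ℝ) * Kb := by
  obtain ⟨hi, he⟩ := beta_diff_eq hw hδ
  rw [he]
  constructor
  · have e : (∫ t in (0:ℝ)..1, (1 - (t:ℂ) ^ w) * (((1 - t) ^ (δ - 1) : ℝ) : ℂ)).re =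
        ∫ t in (0:ℝ)..1, ((1 - (t:ℂ) ^ w) * (((1 - t) ^ (δ - 1) : ℝ) : ℂ)).re := by
      rw [intervalIntegral.integral_of_le zero_le_one, intervalIntegral.integral_of_le zero_le_one]
      exact (integral_re (𝕜 := ℂ) hi.1).symm
    rw [e, intervalIntegral.integral_of_le zero_le_one]
    refine setIntegral_nonneg measurableSet_Ioc fun t ht => ?_
    rw [re_mul_ofReal]
    refine mul_nonneg ?_ (Real.rpow_nonneg (by linarith [ht.2]) _)
    have := (re_le_norm ((t:ℂ) ^ w)).trans (norm_tpow_le hw ht.1 ht.2)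
    simp; linarith
  · unfold Kb
    rw [← intervalIntegral.integral_const_mul]
    refine intervalIntegral.norm_integral_le_of_norm_le zero_le_one (ae_of_all _ fun t ht => ?_)
      (beta_half_int.const_mul _)
    rcases ht.2.eq_or_lt with h1 | h1
    · rw [h1]; simp; positivity
    have h1t : 0 < 1 - t := by linarith
    have e2 : ‖(t:ℂ) ^ ((1/2 : ℂ) - 1) * (1 - (t:ℂ)) ^ ((1/2:ℂ) - 1)‖ = t ^ (-(1/2) : ℝ) * (1 - t) ^ (-(1/2) : ℝ) := by
      rw [norm_mul, norm_cpow_eq_rpow_re_of_pos ht.1]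
      rw [show (1 - (t:ℂ)) = ((1 - t : ℝ) : ℂ) by push_cast; ring, norm_cpow_eq_rpow_re_of_pos h1t]
      norm_num
    rw [e2, norm_mul, norm_real, Real.norm_of_nonneg (by positivity)]
    have e3 : (1 - t) ^ (δ - 1) ≤ (1 - t) ^ (-(1/2) : ℝ) * (1 - t) ^ (-(1/2) : ℝ) := by
      rw [← Real.rpow_add h1t]
      refine Real.rpow_le_rpow_of_exponent_ge h1t (by linarith [ht.1]) (by linarith)
    have e4 : (1 - t) ^ (1/2 : ℝ) * ((1 - t) ^ (-(1/2) : ℝ) * (1 - t) ^ (-(1/2) : ℝ)) = (1 - t) ^ (-(1/2) : ℝ) := by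
      rw [← Real.rpow_add h1t, ← Real.rpow_add h1t]; norm_num
    calc _ ≤ ((2 * ‖w‖) ^ (1/2 : ℝ) * (t ^ (-(1/2) : ℝ) * (1 - t) ^ (1/2 : ℝ))) *
          ((1 - t) ^ (-(1/2) : ℝ) * (1 - t) ^ (-(1/2) : ℝ)) := by
          exact mul_le_mul (one_sub_tpow_bound hw ht.1 h1) e3 (Real.rpow_nonneg h1t.le _)
            ((norm_nonneg _).trans (one_sub_tpow_bound hw ht.1 h1))
      _ = (2 * ‖w‖) ^ (1/2 : ℝ) * (t ^ (-(1/2) : ℝ) * ((1 - t) ^ (1/2 : ℝ) *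
          ((1 - t) ^ (-(1/2) : ℝ) * (1 - t) ^ (-(1/2) : ℝ)))) := by ring
      _ = _ := by rw [e4]

lemma Gamma_ne {u : ℂ} (hu : 0 < u.re) : Gamma u ≠ 0 := Gamma_ne_zero_of_re_pos hu

lemma beta_limit {w : ℂ} (hw : 0 ≤ w.re) :
    Tendsto (fun δ : ℝ => betaIntegral 1 δ - betaIntegral (1 + w) δ) (𝓝[>] 0)
      (𝓝 (digamma (1 + w) + Real.eulerMascheroniConstant)) := by
  have hw1 : 0 < (1 + w).re := by simp; linarith
  have gd : ∀ u : ℂ, 0 < u.re → DifferentiableAt ℂ Gamma u := fun u hu =>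
    differentiableAt_Gamma u (fun m h => by
      have := congrArg re h; simp at this; have h2 : (0:ℝ) ≤ m := Nat.cast_nonneg m; linarith)
  let k : ℂ → ℂ := fun δ => (Gamma (1 + δ))⁻¹ - Gamma (1 + w) / Gamma (1 + w + δ)
  have hinv : ∀ u : ℂ, 0 < u.re → HasDerivAt (fun δ => (Gamma (u + δ))⁻¹) (-(deriv Gamma u) / Gamma u ^ 2) 0 := by
    intro u hu
    have h1 : HasDerivAt (fun δ => Gamma (u + δ)) (deriv Gamma u) 0 := by
      have := (gd u hu).hasDerivAt
      rw [← add_zero u] at this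
      have := this.comp_const_add u 0
      simpa using this
    have := h1.inv (by simpa using Gamma_ne hu)
    simp only [add_zero] at this
    exact this
  have hk : HasDerivAt k (digamma (1 + w) + Real.eulerMascheroniConstant) 0 := by
    have := (hinv 1 (by simp)).sub ((hinv (1 + w) hw1).const_mul (Gamma (1 + w)))
    refine this.congr_deriv ?_
    rw [digamma_def, logDeriv_apply]
    have h2 : deriv Gamma 1 = - Real.eulerMascheroniConstant := by
      have := digamma_one
      rw [digamma_def, logDeriv_apply, Gamma_one, div_one] at this
      exact this
    rw [h2, Gamma_one]
    have := Gamma_ne hw1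
    field_simp
    ring
  have hk' : HasDerivAt (fun δ : ℝ => k δ) (digamma (1 + w) + Real.eulerMascheroniConstant) 0 := by
    refine HasDerivAt.comp_ofReal (e := k) (z := 0) ?_
    simpa using hk
  have hs := hk'.tendsto_slope_zero_right
  have hG : Tendsto (fun δ : ℝ => Gamma (1 + δ)) (𝓝[>] 0) (𝓝 1) := by
    have : ContinuousAt (fun δ : ℝ => Gamma (1 + δ)) 0 := by
      refine ContinuousAt.comp (f := fun δ : ℝ => (1 + δ : ℂ)) (g := Gamma) ?_ (by fun_prop)
      exact (gd _ (by simp)).continuousAt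
    have := this.tendsto
    simp only [ofReal_zero, add_zero, Gamma_one] at this
    exact this.mono_left nhdsWithin_le_nhds
  have := hG.mul hs
  rw [one_mul] at this
  refine this.congr' ?_
  filter_upwards [self_mem_nhdsWithin] with δ hδ
  have hδ0 : (0:ℝ) < δ := hδ
  have hδc : (δ:ℂ) ≠ 0 := by exact_mod_cast hδ0.ne'
  have k0 : k 0 = 0 := by simp [k, div_self (Gamma_ne hw1)]
  have b1 := Gamma_mul_Gamma_eq_betaIntegral (s := 1) (t := δ) (by simp) (by simpa)
  have b2 := Gamma_mul_Gamma_eq_betaIntegral (s := 1 + w) (t := δ) hw1 (by simpa)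
  have g1 : Gamma (1 + δ) ≠ 0 := Gamma_ne (by simp; linarith)
  have g2 : Gamma (1 + w + δ) ≠ 0 := Gamma_ne (by simp; linarith)
  have g3 : Gamma (1 + δ) = δ * Gamma δ := by rw [add_comm, Gamma_add_one _ hδc]
  have c1 : betaIntegral 1 δ = Gamma δ / Gamma (1 + δ) := by
    rw [eq_div_iff g1, mul_comm, ← b1, Gamma_one, one_mul]
  have c2 : betaIntegral (1 + w) δ = Gamma (1 + w) * Gamma δ / Gamma (1 + w + δ) := by
    rw [eq_div_iff g2, mul_comm, ← b2]
  rw [c1, c2]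
  simp only [zero_add, ofReal_zero, k0, sub_zero, k]
  have : (δ⁻¹ • ((Gamma (1 + δ))⁻¹ - Gamma (1 + w) / Gamma (1 + w + δ)) : ℂ) =
    (δ:ℂ)⁻¹ * ((Gamma (1 + δ))⁻¹ - Gamma (1 + w) / Gamma (1 + w + δ)) := by
    rw [Complex.real_smul]; push_cast; rfl
  rw [this]
  nth_rewrite 1 [g3]
  field_simp

lemma digamma_bounds {w : ℂ} (hw : 0 ≤ w.re) :
    0 ≤ (digamma (1 + w) + Real.eulerMascheroniConstant).re ∧
    ‖digamma (1 + w) + Real.eulerMascheroniConstant‖ ≤ (2 * ‖w‖) ^ (1/2 : ℝ) * Kb := by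
  have hl := beta_limit hw
  constructor
  · refine ge_of_tendsto ((continuous_re.tendsto _).comp hl) ?_
    filter_upwards [self_mem_nhdsWithin] with δ hδ
    exact (beta_diff_bound hw hδ).1
  · refine le_of_tendsto hl.norm ?_
    filter_upwards [self_mem_nhdsWithin] with δ hδ
    exact (beta_diff_bound hw hδ).2

lemma Gamma_ratio_bound {δ : ℝ} (hδ : 0 < δ) : ∃ C : ℝ, 0 ≤ C ∧ ∀ u : ℂ, 1 ≤ u.re → ‖Gamma u / Gamma (u + δ)‖ ≤ C := by
  refine ⟨(∫ t in (0:ℝ)..1, ‖(t:ℂ) ^ ((1:ℂ) - 1) * (1 - (t:ℂ)) ^ ((δ:ℂ) - 1)‖) / ‖Gamma δ‖, ?_, ?_⟩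
  · refine div_nonneg (intervalIntegral.integral_nonneg zero_le_one (fun _ _ => norm_nonneg _)) (norm_nonneg _)
  · intro u hu
    have b2 := Gamma_mul_Gamma_eq_betaIntegral (s := u) (t := δ) (by linarith) (by simpa)
    have g2 : Gamma (u + δ) ≠ 0 := Gamma_ne (by simp; linarith)
    have g1 : Gamma (δ : ℂ) ≠ 0 := Gamma_ne (by simpa)
    have : Gamma u / Gamma (u + δ) = betaIntegral u δ / Gamma δ := by
      rw [div_eq_div_iff g2 g1, b2]; ring
    rw [this, norm_div]
    gcongr
    unfold betaIntegral
    refine intervalIntegral.norm_integral_le_of_norm_le zero_le_one (ae_of_all _ fun t ht => ?_)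
      (betaIntegral_convergent (by simp) (by simpa)).norm
    rw [sub_self, cpow_zero, one_mul, norm_mul]
    have := norm_tpow_le (w := u - 1) (by simp; linarith) ht.1 ht.2
    have h2 := norm_nonneg ((1 - (t:ℂ)) ^ ((δ:ℂ) - 1))
    nlinarith


noncomputable def Xi (s : ℂ) : ℂ := (s * (s - 1) * completedRiemannZeta₀ s + 1) / 2

lemma Xi_one_sub (s : ℂ) : Xi (1 - s) = Xi s := by
  unfold Xi
  rw [completedRiemannZeta₀_one_sub]; ring

lemma Xi_diff : Differentiable ℂ Xi := by
  unfold Xi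
  have := differentiable_completedZeta₀
  fun_prop

lemma pi_c_ne : (Real.pi : ℂ) ≠ 0 := by exact_mod_cast Real.pi_ne_zero

lemma Xi_eq {s : ℂ} (hs : 0 < s.re) :
    Xi s = riemannZeta₁ s * (Real.pi : ℂ) ^ (-s / 2) * Gamma (s / 2 + 1) := by
  have hs0 : s ≠ 0 := by rintro rfl; simp at hs
  by_cases h1 : s = 1
  · subst h1
    rw [riemannZeta₁_one, Gamma_add_one _ (by norm_num), Gamma_one_half_eq]
    have : (Real.pi : ℂ) ^ (-1 / 2 : ℂ) * (Real.pi : ℂ) ^ (1 / 2 : ℂ) = 1 := by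
      rw [← cpow_add _ _ pi_c_ne]; norm_num
    unfold Xi
    linear_combination (-1/2 : ℂ) * this
  · have h1' : 1 - s ≠ 0 := sub_ne_zero.mpr (Ne.symm h1)
    have hg : Gammaℝ s ≠ 0 := Gammaℝ_ne_zero_of_re_pos hs
    rw [Z_eq h1, Gamma_add_one _ (by simpa using hs0), riemannZeta_def_of_ne_zero hs0]
    have e : (s - 1) * (completedRiemannZeta s / Gammaℝ s) * (Real.pi : ℂ) ^ (-s / 2) * (s / 2 * Gamma (s / 2))
        = (s - 1) * (completedRiemannZeta s / Gammaℝ s) * (s / 2) * Gammaℝ s := by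
      rw [Gammaℝ_def]; ring
    rw [e, completedRiemannZeta_eq]
    unfold Xi
    field_simp
    ring

lemma Xi_ne_zero (hRH : ∀ s : ℂ, riemannZeta s = 0 → 0 < s.re → s.re < 1 → s.re = 1 / 2) {s : ℂ}
    (hs : 1 / 2 < s.re) : Xi s ≠ 0 := by
  rw [Xi_eq (by linarith)]
  refine mul_ne_zero (mul_ne_zero (Z_ne_zero hRH hs) ?_) (Gamma_ne (by simp; linarith))
  rw [cpow_ne_zero_iff]; exact Or.inl pi_c_ne

lemma norm_Z_conj (s : ℂ) : ‖riemannZeta₁ (starRingEnd ℂ s)‖ = ‖riemannZeta₁ s‖ := by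
  by_cases h1 : s = 1
  · subst h1; simp
  · have h2 : starRingEnd ℂ s ≠ 1 := by
      intro h; apply h1; have := congrArg (starRingEnd ℂ) h; simpa using this
    rw [Z_eq h1, Z_eq h2, riemannZeta_conj, ← norm_conj ((s-1) * riemannZeta s)]
    simp

lemma norm_Xi_conj {s : ℂ} (hs : 0 < s.re) : ‖Xi (starRingEnd ℂ s)‖ = ‖Xi s‖ := by
  rw [Xi_eq hs, Xi_eq (by simpa using hs), norm_mul, norm_mul, norm_mul, norm_mul, norm_Z_conj,
    norm_cpow_eq_rpow_re_of_pos Real.pi_pos, norm_cpow_eq_rpow_re_of_pos Real.pi_pos]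
  have e1 : ‖Gamma (starRingEnd ℂ s / 2 + 1)‖ = ‖Gamma (s / 2 + 1)‖ := by
    rw [← norm_conj (Gamma (s/2+1)), ← Gamma_conj, map_add, map_div₀, map_one, Complex.conj_ofNat]
  rw [e1]
  congr 2
  simp

lemma zeta_sub_one {s : ℂ} (hs : 2 ≤ s.re) : ‖riemannZeta s - 1‖ ≤ Real.pi ^ 2 / 6 - 1 := by
  have hs1r : 1 < s.re := by linarith
  have hz := hasSum_zeta_two
  have hsum : Summable fun n : ℕ => 1 / ((n:ℂ) + 1) ^ s := by
    have := (summable_nat_add_iff 1).mpr (Complex.summable_one_div_nat_cpow.mpr hs1r)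
    simpa using this
  rw [zeta_eq_tsum_one_div_nat_add_one_cpow hs1r, hsum.tsum_eq_zero_add]
  have hz1 : HasSum (fun n : ℕ => 1 / ((n:ℝ) + 2) ^ 2) (Real.pi ^ 2 / 6 - 1) := by
    have := (hasSum_nat_add_iff' 2).mpr hz
    simpa [Finset.sum_range_succ] using this
  have hb : ‖∑' n : ℕ, 1 / (((n + 1 : ℕ):ℂ) + 1) ^ s‖ ≤ Real.pi ^ 2 / 6 - 1 := by
    refine tsum_of_norm_bounded hz1 fun n => ?_
    rw [norm_div, norm_one]
    have e : (((n + 1 : ℕ):ℂ) + 1) = ((n + 2 : ℝ) : ℂ) := by push_cast; ring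
    rw [e, norm_cpow_eq_rpow_re_of_pos (by positivity), ← Real.rpow_two]
    have hn : (1:ℝ) ≤ n + 2 := by linarith [(Nat.cast_nonneg n : (0:ℝ) ≤ n)]
    gcongr
  simpa using hb

lemma pi_sq_lt : Real.pi ^ 2 / 6 - 1 < 2/3 := by
  have := Real.pi_lt_d2; nlinarith [Real.pi_pos]

lemma Z_two_sided {s : ℂ} (hs : 2 ≤ s.re) : (1/3) * ‖s - 1‖ ≤ ‖riemannZeta₁ s‖ ∧ ‖riemannZeta₁ s‖ ≤ 2 * ‖s - 1‖ := by
  have h1 : s ≠ 1 := by rintro rfl; norm_num at hs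
  rw [Z_eq h1, norm_mul]
  have := zeta_sub_one hs
  have := pi_sq_lt
  have a := norm_sub_norm_le (1:ℂ) (1 - riemannZeta s)
  have b := norm_add_le (1:ℂ) (riemannZeta s - 1)
  simp only [sub_sub_cancel, add_sub_cancel, norm_one] at a b
  rw [norm_sub_rev] at a
  constructor <;> nlinarith [norm_nonneg (s-1)]


lemma Xi_ratio {δ : ℝ} (hδ : 0 < δ) (hδ4 : δ < 1/4) : ∃ C : ℝ, 0 ≤ C ∧ ∀ s : ℂ, 1 / 2 ≤ s.re →
    ‖Xi (s - δ) / Xi (s + δ)‖ ≤ C * (‖riemannZeta₁ (s - δ)‖ / ‖riemannZeta₁ (s + δ)‖) := by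
  obtain ⟨C, hC, h⟩ := Gamma_ratio_bound hδ
  refine ⟨Real.pi ^ δ * C, by positivity, fun s hs => ?_⟩
  have h1 : 0 < (s - δ).re := by simp; linarith
  have h2 : 0 < (s + δ).re := by simp; linarith
  rw [Xi_eq h1, Xi_eq h2]
  have hg := h ((s - δ) / 2 + 1) (by simp; linarith)
  have e : (s - δ) / 2 + 1 + δ = (s + δ) / 2 + 1 := by ring
  rw [e] at hg
  have hp : ‖(Real.pi : ℂ) ^ (-(s - δ) / 2)‖ / ‖(Real.pi : ℂ) ^ (-(s + δ) / 2)‖ = Real.pi ^ δ := by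
    rw [norm_cpow_eq_rpow_re_of_pos Real.pi_pos, norm_cpow_eq_rpow_re_of_pos Real.pi_pos, ← Real.rpow_sub Real.pi_pos]
    congr 1
    simp; ring
  rw [norm_div] at hg
  rw [norm_div, norm_mul, norm_mul, norm_mul, norm_mul, mul_div_mul_comm, mul_div_mul_comm, hp]
  calc _ ≤ ‖riemannZeta₁ (s - δ)‖ / ‖riemannZeta₁ (s + δ)‖ * Real.pi ^ δ * C := by gcongr
    _ = _ := by ring

lemma Xi_growth (hRH : ∀ s : ℂ, riemannZeta s = 0 → 0 < s.re → s.re < 1 → s.re = 1 / 2)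
    {δ : ℝ} (hδ : 0 < δ) (hδ4 : δ < 1/4) : ∃ A B : ℝ, 0 ≤ A ∧ ∀ s : ℂ, 1 / 2 ≤ s.re →
    ‖Xi (s - δ) / Xi (s + δ)‖ ≤ A * Real.exp (B * ‖s‖) := by
  obtain ⟨C, hC, h⟩ := Xi_ratio hδ hδ4
  obtain ⟨D, hD, hH⟩ := H_bounds hRH (σ := 1/2 + δ) (by linarith) (by linarith)
  refine ⟨C * (18 * Real.exp 2 * Real.exp (2 * D)), 1 + D, by positivity, fun s hs => (h s hs).trans ?_⟩
  rw [mul_assoc]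
  refine mul_le_mul_of_nonneg_left ?_ hC
  have hδn : ‖(δ:ℂ)‖ ≤ 1 := by rw [norm_real, Real.norm_of_nonneg hδ.le]; linarith
  have a1 := Z_bound (s := s - δ) (by simp; linarith)
  have a2 := (hH (s + δ) (by simp; linarith)).2
  have n1 : ‖s - δ‖ ≤ ‖s‖ + 1 := (norm_sub_le _ _).trans (by linarith)
  have n2 : ‖s + δ‖ ≤ ‖s‖ + 1 := (norm_add_le _ _).trans (by linarith)
  have a3 : ‖riemannZeta₁ (s - δ)‖ ≤ 18 * Real.exp (2 + ‖s‖) := by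
    have := Real.quadratic_le_exp_of_nonneg (x := 2 + ‖s‖) (by positivity)
    nlinarith [norm_nonneg s, norm_nonneg (s - δ)]
  have a4 : Real.exp (-(D * (2 + ‖s‖))) ≤ ‖riemannZeta₁ (s + δ)‖ := by
    refine le_trans ?_ a2
    rw [Real.exp_le_exp]
    nlinarith
  rw [div_le_iff₀ ((Real.exp_pos _).trans_le a4)]
  calc _ ≤ 18 * Real.exp (2 + ‖s‖) := a3
    _ = 18 * Real.exp 2 * Real.exp (2 * D) * Real.exp ((1 + D) * ‖s‖) * Real.exp (-(D * (2 + ‖s‖))) := by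
      rw [mul_assoc, mul_assoc, mul_assoc, ← Real.exp_add, ← Real.exp_add, ← Real.exp_add]; ring_nf
    _ ≤ _ := by gcongr

lemma Xi_ratio_le_one (hRH : ∀ s : ℂ, riemannZeta s = 0 → 0 < s.re → s.re < 1 → s.re = 1 / 2)
    {δ : ℝ} (hδ : 0 < δ) (hδ4 : δ < 1/4) {s : ℂ} (hs : 1 / 2 ≤ s.re) :
    ‖Xi (s - δ) / Xi (s + δ)‖ ≤ 1 := by
  let q : ℂ → ℂ := fun z => Xi (1/2 + z - δ) / Xi (1/2 + z + δ)
  have key : ‖q (s - 1/2)‖ ≤ 1 := by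
    refine PhragmenLindelof.right_half_plane_of_bounded_on_real (f := q) ?_ ?_ ?_ ?_ ?_
    · refine DifferentiableOn.diffContOnCl ?_
      intro z hz
      have hz' : 0 ≤ z.re := by
        rw [closure_setOf_lt_re] at hz
        exact hz
      refine DifferentiableAt.differentiableWithinAt ?_
      have := Xi_diff
      refine DifferentiableAt.div (by fun_prop) (by fun_prop) (Xi_ne_zero hRH ?_)
      simp; linarith
    · obtain ⟨A, B, hA, h⟩ := Xi_growth hRH hδ hδ4
      refine ⟨1, by norm_num, |B|, ?_⟩
      refine Asymptotics.IsBigO.of_bound (A * Real.exp |B|) ?_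
      rw [eventually_inf_principal]
      refine Eventually.of_forall fun z hz => ?_
      have hz' : 0 < z.re := hz
      refine (h (1/2 + z) (by simp; linarith)).trans ?_
      rw [Real.norm_of_nonneg (Real.exp_pos _).le, Real.rpow_one, mul_assoc, ← Real.exp_add]
      refine mul_le_mul_of_nonneg_left ?_ hA
      rw [Real.exp_le_exp]
      have n1 : ‖1/2 + z‖ ≤ 1 + ‖z‖ := (norm_add_le _ _).trans (by norm_num)
      nlinarith [le_abs_self B, abs_nonneg B, norm_nonneg (1/2+z)]
    · obtain ⟨C, hC, h⟩ := Xi_ratio hδ hδ4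
      refine isBoundedUnder_of_eventually_le (a := C * 6) ?_
      filter_upwards [eventually_ge_atTop 2] with x hx
      refine (h (1/2 + x) (by simp; linarith)).trans ?_
      refine mul_le_mul_of_nonneg_left ?_ hC
      have b1 := (Z_two_sided (s := 1/2 + x - δ) (by simp; linarith)).2
      have b2 := (Z_two_sided (s := 1/2 + x + δ) (by simp; linarith)).1
      have e1 : ‖(1/2 + x - δ - 1 : ℂ)‖ = x - δ - 1/2 := by
        rw [show (1/2 + x - δ - 1 : ℂ) = ((x - δ - 1/2 : ℝ) : ℂ) by push_cast; ring, norm_real,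
          Real.norm_of_nonneg (by linarith)]
      have e2 : ‖(1/2 + x + δ - 1 : ℂ)‖ = x + δ - 1/2 := by
        rw [show (1/2 + x + δ - 1 : ℂ) = ((x + δ - 1/2 : ℝ) : ℂ) by push_cast; ring, norm_real,
          Real.norm_of_nonneg (by linarith)]
      rw [e1] at b1
      rw [e2] at b2
      rw [div_le_iff₀ (by linarith)]
      linarith
    · intro y
      have e : (1/2 + y * I - δ : ℂ) = 1 - starRingEnd ℂ (1/2 + y * I + δ) := by
        apply Complex.ext <;> simp <;> ring
      simp only [q]
      rw [norm_div, e, Xi_one_sub, norm_Xi_conj (by simp; linarith)]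
      exact div_self_le_one _
    · simp; linarith
  simpa [q] using key


noncomputable def Pf (s : ℂ) : ℂ := (digamma (1 + s / 2) + Real.eulerMascheroniConstant) / 2

noncomputable def c0 : ℝ := (Real.eulerMascheroniConstant + Real.log Real.pi) / 2

noncomputable def Gf (s : ℂ) : ℂ := logDeriv riemannZeta₁ s + Pf s - c0

lemma Gamma_diffAt {u : ℂ} (hu : 0 < u.re) : DifferentiableAt ℂ Gamma u :=
  differentiableAt_Gamma u (fun m h => by
    have := congrArg re h; simp at this; have h2 : (0:ℝ) ≤ m := Nat.cast_nonneg m; linarith)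

lemma digamma_diffAt {u : ℂ} (hu : 0 < u.re) : DifferentiableAt ℂ digamma u := by
  have ho : IsOpen {u : ℂ | 0 < u.re} := isOpen_lt continuous_const continuous_re
  have hd : DifferentiableOn ℂ Gamma {u : ℂ | 0 < u.re} := fun u hu => (Gamma_diffAt hu).differentiableWithinAt
  have := (hd.deriv ho).differentiableAt (ho.mem_nhds hu)
  rw [digamma_def]
  exact this.div (Gamma_diffAt hu) (Gamma_ne hu)

lemma Pf_diffAt {s : ℂ} (hs : 0 < s.re) : DifferentiableAt ℂ Pf s := by
  unfold Pf
  have h : DifferentiableAt ℂ (fun s : ℂ => digamma (1 + s / 2)) s := by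
    refine DifferentiableAt.comp (g := digamma) (f := fun s : ℂ => 1 + s / 2) s (digamma_diffAt ?_) (by fun_prop)
    simp; linarith
  exact (h.add_const _).div_const _

lemma H_diffAt {s : ℂ} (hs : riemannZeta₁ s ≠ 0) : DifferentiableAt ℂ (logDeriv riemannZeta₁) s := by
  have h := differentiable_riemannZeta₁
  exact (h.deriv s).div (h s) hs

lemma Pf_re {s : ℂ} (hs : 0 < s.re) : 0 ≤ (Pf s).re := by
  have := (digamma_bounds (w := s / 2) (by simp; linarith)).1
  unfold Pf
  rw [div_ofNat_re]; positivity

lemma Pf_norm {s : ℂ} (hs : 0 < s.re) : ‖Pf s‖ ≤ Kb * ‖s‖ ^ (1/2 : ℝ) := by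
  have := (digamma_bounds (w := s / 2) (by simp; linarith)).2
  unfold Pf
  rw [norm_div]
  have e : 2 * ‖s / 2‖ = ‖s‖ := by simp; ring
  rw [e] at this
  have h2 : ‖(2:ℂ)‖ = 2 := by simp
  rw [h2]
  have := Kb_nonneg
  have : 0 ≤ ‖s‖ ^ (1/2 : ℝ) := by positivity
  nlinarith

lemma Xi_hasDeriv (hRH : ∀ s : ℂ, riemannZeta s = 0 → 0 < s.re → s.re < 1 → s.re = 1 / 2)
    {s : ℂ} (hs : 1 / 2 < s.re) : HasDerivAt Xi (Xi s * Gf s) s := by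
  have hZ := Z_ne_zero hRH hs
  have hu : 0 < (s / 2 + 1).re := by simp; linarith
  have d1 : HasDerivAt riemannZeta₁ (riemannZeta₁ s * logDeriv riemannZeta₁ s) s := by
    have := (differentiable_riemannZeta₁ s).hasDerivAt
    refine this.congr_deriv ?_
    rw [logDeriv_apply]; field_simp
  have d2 : HasDerivAt (fun s : ℂ => (Real.pi : ℂ) ^ (-s / 2)) ((Real.pi : ℂ) ^ (-s / 2) * log Real.pi * (-1 / 2)) s := by
    have h : HasDerivAt (fun s : ℂ => -s / 2) (-1 / 2) s := ((hasDerivAt_id s).neg).div_const 2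
    exact h.const_cpow (Or.inl pi_c_ne)
  have d3 : HasDerivAt (fun s : ℂ => Gamma (s / 2 + 1)) (Gamma (s / 2 + 1) * digamma (1 + s / 2) * (1 / 2)) s := by
    have h : HasDerivAt (fun s : ℂ => s / 2 + 1) (1 / 2) s := ((hasDerivAt_id s).div_const 2).add_const 1
    have h2 : HasDerivAt Gamma (Gamma (s / 2 + 1) * digamma (1 + s / 2)) (s / 2 + 1) := by
      refine (Gamma_diffAt hu).hasDerivAt.congr_deriv ?_
      rw [add_comm 1 (s / 2), digamma_def, logDeriv_apply]
      rw [← mul_div_assoc, mul_div_cancel_left₀ _ (Gamma_ne hu)]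
    exact HasDerivAt.comp s h2 h
  have d := (d1.mul d2).mul d3
  have ho : {u : ℂ | 0 < u.re} ∈ 𝓝 s :=
    (isOpen_lt continuous_const continuous_re).mem_nhds (by simp; linarith)
  have heq : Xi =ᶠ[𝓝 s] (fun s => riemannZeta₁ s * (Real.pi : ℂ) ^ (-s / 2) * Gamma (s / 2 + 1)) := by
    filter_upwards [ho] with u hu
    exact Xi_eq hu
  refine (d.congr_of_eventuallyEq heq).congr_deriv ?_
  rw [heq.eq_of_nhds]
  unfold Gf Pf c0
  push_cast
  rw [ofReal_log Real.pi_pos.le]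
  simp only [Pi.mul_apply]
  ring

lemma Gf_re (hRH : ∀ s : ℂ, riemannZeta s = 0 → 0 < s.re → s.re < 1 → s.re = 1 / 2)
    {s : ℂ} (hs : 1 / 2 < s.re) : 0 ≤ (Gf s).re := by
  have hX := Xi_ne_zero hRH hs
  have d1 : HasDerivAt (fun δ : ℂ => Xi (s - δ)) (-(Xi s * Gf s)) 0 := by
    have := (Xi_hasDeriv hRH hs)
    rw [← sub_zero s] at this
    have := this.comp_const_sub s 0
    simpa using this
  have d2 : HasDerivAt (fun δ : ℂ => Xi (s + δ)) (Xi s * Gf s) 0 := by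
    have := (Xi_hasDeriv hRH hs)
    rw [← add_zero s] at this
    have := this.comp_const_add s 0
    simpa using this
  have d : HasDerivAt (fun δ : ℂ => Xi (s - δ) / Xi (s + δ)) (-2 * Gf s) 0 := by
    refine (d1.div d2 (by simpa using hX)).congr_deriv ?_
    simp only [sub_zero, add_zero]
    field_simp
    ring
  have d' : HasDerivAt (fun δ : ℝ => Xi (s - δ) / Xi (s + δ)) (-2 * Gf s) 0 := by
    refine HasDerivAt.comp_ofReal (e := fun δ : ℂ => Xi (s - δ) / Xi (s + δ)) (z := 0) ?_
    simpa using d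
  have hl := (continuous_re.tendsto _).comp d'.tendsto_slope_zero_right
  have : (-2 * Gf s).re ≤ 0 := by
    refine le_of_tendsto hl ?_
    have : Set.Ioo (0:ℝ) (1/4) ∈ 𝓝[>] (0:ℝ) := Ioo_mem_nhdsGT (by norm_num)
    filter_upwards [this] with δ hδ
    simp only [Function.comp, zero_add, ofReal_zero, sub_zero, add_zero, div_self hX]
    rw [Complex.smul_re, sub_re, one_re, smul_eq_mul]
    have h1 := (re_le_norm _).trans (Xi_ratio_le_one hRH hδ.1 hδ.2 (s := s) hs.le)
    have h2 : 0 < δ⁻¹ := inv_pos.mpr hδ.1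
    nlinarith
  simp at this
  exact this

lemma Gf_norm (hRH : ∀ s : ℂ, riemannZeta s = 0 → 0 < s.re → s.re < 1 → s.re = 1 / 2)
    {σ : ℝ} (hσ : 1 / 2 < σ) (hσ1 : σ ≤ 1) : ∃ C : ℝ, 0 ≤ C ∧ ∀ s : ℂ, σ ≤ s.re →
      ‖Gf s‖ ≤ C * ‖s‖ ^ (1/2 : ℝ) := by
  obtain ⟨D, hD, hH⟩ := H_bounds hRH hσ hσ1
  refine ⟨D + Kb + 2 * |c0|, by have := Kb_nonneg; positivity, fun s hs => ?_⟩
  have h1 := (hH s hs).1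
  have h2 := Pf_norm (s := s) (by linarith)
  have h3 : 1 ≤ 2 * ‖s‖ ^ (1/2 : ℝ) := by
    have a : (1/4 : ℝ) ≤ ‖s‖ := by
      have := (le_abs_self _).trans (abs_re_le_norm s); linarith
    have b : (1/4 : ℝ) ^ (1/2 : ℝ) ≤ ‖s‖ ^ (1/2 : ℝ) := Real.rpow_le_rpow (by norm_num) a (by norm_num)
    have c : (1/4 : ℝ) ^ (1/2 : ℝ) = 1 / 2 := by
      rw [← Real.sqrt_eq_rpow, show (1/4 : ℝ) = (1/2) ^ 2 by norm_num, Real.sqrt_sq (by norm_num)]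
    linarith
  unfold Gf
  refine (norm_sub_le _ _).trans ?_
  have h4 := norm_add_le (logDeriv riemannZeta₁ s) (Pf s)
  rw [norm_real, Real.norm_eq_abs]
  nlinarith [abs_nonneg c0]

lemma Gf_diffAt (hRH : ∀ s : ℂ, riemannZeta s = 0 → 0 < s.re → s.re < 1 → s.re = 1 / 2)
    {s : ℂ} (hs : 1 / 2 < s.re) : DifferentiableAt ℂ Gf s := by
  unfold Gf
  exact ((H_diffAt (Z_ne_zero hRH hs)).add (Pf_diffAt (by linarith))).sub_const _

lemma Pf_one : Pf 1 = (1 - Real.log 2 : ℝ) := by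
  unfold Pf
  have h := digamma_apply_add_one (1/2) (fun m h => by
    have := congrArg re h; simp at this; have h2 : (0:ℝ) ≤ m := Nat.cast_nonneg m; linarith)
  rw [add_comm 1 (1/2 : ℂ), h, digamma_one_half]
  push_cast
  rw [show (Real.log 2 : ℂ) = Complex.log 2 by rw [ofReal_log (by norm_num)]; norm_num]
  ring

lemma Pf_two : Pf 2 = 1 / 2 := by
  unfold Pf
  have h := digamma_apply_add_one 1 (fun m h => by
    have := congrArg re h; simp at this; have h2 : (0:ℝ) ≤ m := Nat.cast_nonneg m; linarith)
  rw [div_self (by norm_num), h, digamma_one]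
  ring

lemma H_one : logDeriv riemannZeta₁ 1 = Real.eulerMascheroniConstant := by
  rw [logDeriv_apply, riemannZeta₁_one, deriv_riemannZeta₁_one, div_one]

lemma Gf_one : Gf 1 = (Real.eulerMascheroniConstant + (1 - Real.log 2) - c0 : ℝ) := by
  unfold Gf; rw [H_one, Pf_one]; push_cast; ring


lemma inv_cpow_neg' {y : ℝ} (hy : 0 < y) (s : ℂ) : ((y⁻¹ : ℝ) : ℂ) ^ (-s) = (y : ℂ) ^ s := by
  rw [ofReal_inv, cpow_neg, inv_cpow, inv_inv]
  rw [arg_ofReal_of_nonneg hy.le]; exact Real.pi_pos.ne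

lemma kern1 {σ y : ℝ} (hσ : 0 < σ) (hy : 0 < y) :
    ∫ t : ℝ, (y : ℂ) ^ (σ + t * I : ℂ) / ((σ + t * I) * (σ + t * I + 1)) =
      ((2 * Real.pi * max (1 - y⁻¹) 0 : ℝ) : ℂ) := by
  let f : ℝ → ℂ := fun t => Set.indicator (Set.Ioc 0 1) (fun _ => (1:ℂ)) t - Set.indicator (Set.Ioc 0 1) (fun t : ℝ => (t:ℂ) ^ (1:ℂ)) t
  have hm : ∀ s : ℂ, 0 < s.re → HasMellin f s (1 / (s * (s + 1))) := by
    intro s hs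
    have h1 := hasMellin_one_Ioc hs
    have h2 := hasMellin_cpow_Ioc 1 (s := s) (by simp; linarith)
    have h := hasMellin_sub h1.1 h2.1
    rw [h1.2, h2.2] at h
    have e : 1 / s - 1 / (s + 1) = 1 / (s * (s + 1)) := by
      have := div_ne hs (le_refl s.re)
      have a := left_ne_zero_of_mul this
      have b := right_ne_zero_of_mul this
      field_simp; ring
    rw [e] at h
    exact h
  have hf : ∀ t : ℝ, 0 < t → f t = ((max (1 - t) 0 : ℝ) : ℂ) := by
    intro t ht
    simp only [f]
    by_cases h : t ≤ 1
    · rw [Set.indicator_of_mem (by exact ⟨ht, h⟩), Set.indicator_of_mem (by exact ⟨ht, h⟩), max_eq_left (by linarith)]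
      simp
    · rw [Set.indicator_of_notMem (fun h' => h h'.2), Set.indicator_of_notMem (fun h' => h h'.2), max_eq_right (by linarith)]
      simp
  have hre : ∀ t : ℝ, (σ + t * I : ℂ).re = σ := by intro t; simp
  have hcont : ContinuousAt f y⁻¹ := by
    have hc : Continuous (fun t : ℝ => ((max (1 - t) 0 : ℝ) : ℂ)) := by fun_prop
    refine hc.continuousAt.congr ?_
    filter_upwards [Ioi_mem_nhds (inv_pos.mpr hy)] with t ht
    exact (hf t ht).symm
  have hv : VerticalIntegrable (mellin f) σ := by
    have : Integrable (fun t : ℝ => (fun s : ℂ => 1 / (s * (s + 1))) (σ + t * I)) := by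
      refine line_integrable (f := fun s : ℂ => 1 / (s * (s + 1))) (C := (1/σ) ^ (1/2 : ℝ)) hσ (fun t => ?_) (fun t => ?_)
      · refine ContinuousAt.div (by fun_prop) (by fun_prop) (div_ne hσ (hre t).ge)
      · refine div_bound hσ (hre t).ge (by positivity) ?_
        rw [norm_one, ← Real.mul_rpow (by positivity) (by positivity)]
        refine Real.one_le_rpow ?_ (by norm_num)
        have : σ ≤ ‖(σ + t * I : ℂ)‖ := (hre t).ge.trans ((le_abs_self _).trans (abs_re_le_norm _))
        rw [one_div, inv_mul_eq_div, le_div_iff₀ hσ]; linarith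
    refine this.congr (ae_of_all _ fun t => ?_)
    exact ((hm _ (by rw [hre]; exact hσ)).2).symm
  have key := mellinInv_mellin_eq σ f (inv_pos.mpr hy) (hm σ (by simpa)).1 hv hcont
  rw [hf _ (inv_pos.mpr hy)] at key
  unfold mellinInv at key
  have e : ∫ t : ℝ, (y : ℂ) ^ (σ + t * I : ℂ) / ((σ + t * I) * (σ + t * I + 1)) =
      ∫ t : ℝ, ((y⁻¹ : ℝ) : ℂ) ^ (-(σ + t * I : ℂ)) • mellin f (σ + t * I) := by
    refine integral_congr_ae (ae_of_all _ fun t => ?_)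
    simp only
    rw [(hm _ (by rw [hre]; exact hσ)).2, inv_cpow_neg' hy, smul_eq_mul, mul_one_div]
  rw [e, ofReal_mul, ← key, Complex.real_smul]
  generalize ∫ t : ℝ, ((y⁻¹ : ℝ) : ℂ) ^ (-(σ + t * I : ℂ)) • mellin f (σ + t * I) = J
  push_cast
  have := Real.pi_ne_zero
  have : (Real.pi : ℂ) ≠ 0 := by exact_mod_cast this
  field_simp

lemma kern2 {σ y : ℝ} (hσ : 1 < σ) (hy : 0 < y) :
    ∫ t : ℝ, (y : ℂ) ^ (σ + t * I : ℂ) / ((σ + t * I - 1) * ((σ + t * I) * (σ + t * I + 1))) =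
      ((2 * Real.pi * ((max (1 - y⁻¹) 0) ^ 2 * y / 2) : ℝ) : ℂ) := by
  have hσ0 : 0 < σ := by linarith
  let g : ℂ → ℝ → ℂ := fun a => Set.indicator (Set.Ioc 0 1) (fun t : ℝ => (t:ℂ) ^ a)
  let f : ℝ → ℂ := fun t => ((1/2:ℂ) • g (-1) t - g 0 t) + (1/2 : ℂ) • g 1 t
  have hne : ∀ s : ℂ, 1 < s.re → s - 1 ≠ 0 := by
    intro s hs h
    rw [sub_eq_zero.mp h] at hs; simp at hs
  have hm : ∀ s : ℂ, 1 < s.re → HasMellin f s (1 / ((s - 1) * (s * (s + 1)))) := by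
    intro s hs
    have h1 := hasMellin_cpow_Ioc (-1) (s := s) (by simp; linarith)
    have h2 := hasMellin_cpow_Ioc 0 (s := s) (by simp; linarith)
    have h3 := hasMellin_cpow_Ioc 1 (s := s) (by simp; linarith)
    have k1 := hasMellin_const_smul h1.1 (1/2 : ℂ)
    have k3 := hasMellin_const_smul h3.1 (1/2 : ℂ)
    have k12 := hasMellin_sub k1.1 h2.1
    have h := hasMellin_add k12.1 k3.1
    rw [k12.2, k1.2, k3.2, h1.2, h2.2, h3.2] at h
    have e : ((1/2 : ℂ) • (1 / (s + -1)) - 1 / (s + 0)) + (1/2 : ℂ) • (1 / (s + 1)) = 1 / ((s - 1) * (s * (s + 1))) := by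
      have := div_ne (σ := s.re) (by linarith) (le_refl s.re)
      have a := left_ne_zero_of_mul this
      have b := right_ne_zero_of_mul this
      have c := hne s hs
      rw [← sub_eq_add_neg, add_zero, smul_eq_mul, smul_eq_mul]
      field_simp; ring
    rw [e] at h
    exact h
  have hf : ∀ t : ℝ, 0 < t → f t = (((max (1 - t) 0) ^ 2 * t⁻¹ / 2 : ℝ) : ℂ) := by
    intro t ht
    simp only [f, g]
    have htc : (t : ℂ) ≠ 0 := by exact_mod_cast ht.ne'
    by_cases h : t ≤ 1
    · have hmem : t ∈ Set.Ioc (0:ℝ) 1 := ⟨ht, h⟩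
      rw [Set.indicator_of_mem hmem, Set.indicator_of_mem hmem, Set.indicator_of_mem hmem, max_eq_left (by linarith)]
      rw [cpow_neg_one, cpow_zero, cpow_one]
      push_cast
      simp only [smul_eq_mul]
      field_simp; ring
    · have hmem : t ∉ Set.Ioc (0:ℝ) 1 := fun h' => h h'.2
      rw [Set.indicator_of_notMem hmem, Set.indicator_of_notMem hmem, Set.indicator_of_notMem hmem, max_eq_right (by linarith)]
      simp
  have hre : ∀ t : ℝ, (σ + t * I : ℂ).re = σ := by intro t; simp
  have hcont : ContinuousAt f y⁻¹ := by
    have hc : ContinuousAt (fun t : ℝ => (((max (1 - t) 0) ^ 2 * t⁻¹ / 2 : ℝ) : ℂ)) y⁻¹ := by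
      have := (inv_pos.mpr hy).ne'
      refine continuous_ofReal.continuousAt.comp ?_
      fun_prop (disch := assumption)
    refine hc.congr ?_
    filter_upwards [Ioi_mem_nhds (inv_pos.mpr hy)] with t ht
    exact (hf t ht).symm
  have hv : VerticalIntegrable (mellin f) σ := by
    have : Integrable (fun t : ℝ => (fun s : ℂ => 1 / (s - 1) / (s * (s + 1))) (σ + t * I)) := by
      refine line_integrable (f := fun s : ℂ => 1 / (s - 1) / (s * (s + 1))) (C := 1 / (σ - 1) * (1/σ) ^ (1/2 : ℝ)) hσ0 (fun t => ?_) (fun t => ?_)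
      · have := hne (σ + t * I) (by rw [hre]; exact hσ)
        refine ContinuousAt.div (ContinuousAt.div (by fun_prop) (by fun_prop) this) (by fun_prop) (div_ne hσ0 (hre t).ge)
      · have hσ1 : 0 < σ - 1 := by linarith
        refine div_bound hσ0 (hre t).ge (by positivity) ?_
        have a1 : σ - 1 ≤ ‖(σ + t * I - 1 : ℂ)‖ := by
          have := (le_abs_self _).trans (abs_re_le_norm (σ + t * I - 1 : ℂ))
          simpa using this
        rw [norm_div, norm_one, mul_assoc, ← Real.mul_rpow (by positivity) (by positivity)]
        have a2 : 1 ≤ (1 / σ * ‖(σ + t * I : ℂ)‖) ^ (1/2 : ℝ) := by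
          refine Real.one_le_rpow ?_ (by norm_num)
          have : σ ≤ ‖(σ + t * I : ℂ)‖ := (hre t).ge.trans ((le_abs_self _).trans (abs_re_le_norm _))
          rw [one_div, inv_mul_eq_div, le_div_iff₀ hσ0]; linarith
        have a3 : 1 / ‖(σ + t * I - 1 : ℂ)‖ ≤ 1 / (σ - 1) := one_div_le_one_div_of_le hσ1 a1
        have a4 : 0 < 1 / (σ - 1) := by positivity
        nlinarith
    refine this.congr (ae_of_all _ fun t => ?_)
    simp only
    rw [(hm _ (by rw [hre]; exact hσ)).2, div_div]
  have key := mellinInv_mellin_eq σ f (inv_pos.mpr hy) (hm σ (by simpa)).1 hv hcont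
  rw [hf _ (inv_pos.mpr hy), inv_inv] at key
  unfold mellinInv at key
  have e : ∫ t : ℝ, (y : ℂ) ^ (σ + t * I : ℂ) / ((σ + t * I - 1) * ((σ + t * I) * (σ + t * I + 1))) =
      ∫ t : ℝ, ((y⁻¹ : ℝ) : ℂ) ^ (-(σ + t * I : ℂ)) • mellin f (σ + t * I) := by
    refine integral_congr_ae (ae_of_all _ fun t => ?_)
    simp only
    rw [(hm _ (by rw [hre]; exact hσ)).2, inv_cpow_neg' hy, smul_eq_mul, mul_one_div]
  rw [e, ofReal_mul, ← key, Complex.real_smul]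
  generalize ∫ t : ℝ, ((y⁻¹ : ℝ) : ℂ) ^ (-(σ + t * I : ℂ)) • mellin f (σ + t * I) = J
  push_cast
  have := Real.pi_ne_zero
  have : (Real.pi : ℂ) ≠ 0 := by exact_mod_cast this
  field_simp


lemma psi1_eq {x : ℝ} (hx : 1 ≤ x) :
    chebyshevPsi1 x = ∑ n ∈ Finset.Icc 0 ⌊x⌋₊, (x - n) * ArithmeticFunction.vonMangoldt n := by
  have hd : deriv (fun t : ℝ => x - t) = fun _ => -1 := by
    ext t
    exact ((hasDerivAt_id t).const_sub x).deriv
  have h := sum_mul_eq_sub_integral_mul₀ (fun n => ArithmeticFunction.vonMangoldt n) (f := fun t : ℝ => x - t)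
    (by simp) x (fun t _ => by fun_prop) (by
      rw [hd]
      exact integrableOn_const (by simp) )
  rw [h]
  simp only [sub_self, zero_mul, zero_sub, hd, neg_mul, one_mul]
  rw [integral_neg, neg_neg]
  unfold chebyshevPsi1
  rw [intervalIntegral.integral_of_le hx]
  refine setIntegral_congr_fun measurableSet_Ioc fun t ht => ?_
  simp only [chebyshevPsi]
  rw [Finset.Icc_eq_cons_Ioc (Nat.zero_le _), Finset.sum_cons, ← Finset.Icc_add_one_left_eq_Ioc]
  simp

lemma g_integrable {σ x : ℝ} (hσ : 0 < σ) (hx : 1 ≤ x) :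
    Integrable (fun t : ℝ => (x : ℂ) ^ ((σ + t * I : ℂ) + 1) / ((σ + t * I) * (σ + t * I + 1))) := by
  have hx0 : 0 < x := by linarith
  have hxc : (x : ℂ) ≠ 0 := by exact_mod_cast hx0.ne'
  have hre : ∀ t : ℝ, (σ + t * I : ℂ).re = σ := by intro t; simp
  refine line_integrable (f := fun s : ℂ => (x : ℂ) ^ (s + 1) / (s * (s + 1))) (C := x ^ (σ + 1) * (1/σ) ^ (1/2 : ℝ)) hσ
    (fun t => ?_) (fun t => ?_)
  · refine ContinuousAt.div ?_ (by fun_prop) (div_ne hσ (hre t).ge)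
    exact ContinuousAt.const_cpow (by fun_prop) (Or.inl hxc)
  · refine div_bound hσ (hre t).ge (by positivity) ?_
    rw [norm_cpow_eq_rpow_re_of_pos hx0, mul_assoc, ← Real.mul_rpow (by positivity) (by positivity), add_re, hre, one_re]
    have : 1 ≤ (1 / σ * ‖(σ + t * I : ℂ)‖) ^ (1/2 : ℝ) := by
      refine Real.one_le_rpow ?_ (by norm_num)
      have : σ ≤ ‖(σ + t * I : ℂ)‖ := (hre t).ge.trans ((le_abs_self _).trans (abs_re_le_norm _))
      rw [one_div, inv_mul_eq_div, le_div_iff₀ hσ]; linarith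
    exact le_mul_of_one_le_right (by positivity) this

lemma Kg_integrable {K : ℂ → ℂ} {σ C x : ℝ} (hσ : 0 < σ) (hx : 1 ≤ x) (hC : 0 ≤ C)
    (hK : ∀ s : ℂ, σ = s.re → ContinuousAt K s)
    (hb : ∀ s : ℂ, σ = s.re → ‖K s‖ ≤ C * ‖s‖ ^ (1/2 : ℝ)) :
    Integrable (fun t : ℝ => K (σ + t * I) * (x : ℂ) ^ ((σ + t * I : ℂ) + 1) / ((σ + t * I) * (σ + t * I + 1))) := by
  have hx0 : 0 < x := by linarith
  have hxc : (x : ℂ) ≠ 0 := by exact_mod_cast hx0.ne'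
  have hre : ∀ t : ℝ, (σ + t * I : ℂ).re = σ := by intro t; simp
  refine line_integrable (f := fun s : ℂ => K s * (x : ℂ) ^ (s + 1) / (s * (s + 1))) (C := x ^ (σ + 1) * C) hσ
    (fun t => ?_) (fun t => ?_)
  · refine ContinuousAt.div (ContinuousAt.mul (hK _ (hre t).symm) ?_) (by fun_prop) (div_ne hσ (hre t).ge)
    exact ContinuousAt.const_cpow (by fun_prop) (Or.inl hxc)
  · refine div_bound hσ (hre t).ge (by positivity) ?_
    rw [norm_mul, norm_cpow_eq_rpow_re_of_pos hx0, add_re, hre, one_re, mul_comm, mul_assoc]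
    exact mul_le_mul_of_nonneg_left (hb _ (hre t).symm) (by positivity)

lemma g_int_eq {σ x : ℝ} (hσ : 0 < σ) (hx : 1 ≤ x) :
    ∫ t : ℝ, (x : ℂ) ^ ((σ + t * I : ℂ) + 1) / ((σ + t * I) * (σ + t * I + 1)) = ((2 * Real.pi * (x - 1) : ℝ) : ℂ) := by
  have hx0 : 0 < x := by linarith
  have hxc : (x : ℂ) ≠ 0 := by exact_mod_cast hx0.ne'
  have h := kern1 hσ hx0
  have e : ∀ t : ℝ, (x : ℂ) ^ ((σ + t * I : ℂ) + 1) / ((σ + t * I) * (σ + t * I + 1)) =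
      x * ((x : ℂ) ^ (σ + t * I : ℂ) / ((σ + t * I) * (σ + t * I + 1))) := by
    intro t; rw [cpow_add _ _ hxc, cpow_one]; ring
  simp_rw [e]
  rw [integral_const_mul, h, max_eq_left (by rw [sub_nonneg]; exact inv_le_one_of_one_le₀ hx)]
  push_cast
  field_simp

lemma logDeriv_Z {s : ℂ} (hs : 1 < s.re) :
    LSeries (fun n => (ArithmeticFunction.vonMangoldt n : ℂ)) s = -logDeriv riemannZeta₁ s + 1 / (s - 1) := by
  rw [ArithmeticFunction.LSeries_vonMangoldt_eq_deriv_riemannZeta_div hs]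
  have h1 : s ≠ 1 := by rintro rfl; simp at hs
  have h1' : s - 1 ≠ 0 := sub_ne_zero.mpr h1
  have hz := riemannZeta_ne_zero_of_one_lt_re hs
  have he : riemannZeta₁ =ᶠ[𝓝 s] (fun s => (s - 1) * riemannZeta s) := by
    filter_upwards [isOpen_ne.mem_nhds h1] with u hu
    exact Z_eq hu
  have hd : HasDerivAt riemannZeta₁ (1 * riemannZeta s + (s - 1) * deriv riemannZeta s) s := by
    have := ((hasDerivAt_id s).sub_const 1).mul (differentiableAt_riemannZeta h1).hasDerivAt
    exact this.congr_of_eventuallyEq he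
  rw [logDeriv_apply, hd.deriv, Z_eq h1]
  field_simp
  ring

lemma perron (hRH : ∀ s : ℂ, riemannZeta s = 0 → 0 < s.re → s.re < 1 → s.re = 1 / 2) {x : ℝ} (hx : 1 ≤ x) :
    ∫ t : ℝ, logDeriv riemannZeta₁ ((2:ℝ) + t * I) * (x : ℂ) ^ (((2:ℝ) + t * I : ℂ) + 1) /
      (((2:ℝ) + t * I) * ((2:ℝ) + t * I + 1)) =
    ((2 * Real.pi * ((x - 1) ^ 2 / 2 - chebyshevPsi1 x) : ℝ) : ℂ) := by
  have hx0 : 0 < x := by linarith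
  have hxc : (x : ℂ) ≠ 0 := by exact_mod_cast hx0.ne'
  have hre : ∀ t : ℝ, (((2:ℝ):ℂ) + t * I : ℂ).re = 2 := by intro t; simp
  let g : ℝ → ℂ := fun t => (x : ℂ) ^ (((2:ℝ) + t * I : ℂ) + 1) / (((2:ℝ) + t * I) * ((2:ℝ) + t * I + 1))
  have hg : Integrable g := g_integrable (σ := 2) (by norm_num) hx
  let L : ℕ → ℂ := fun n => (ArithmeticFunction.vonMangoldt n : ℂ)
  let F : ℕ → ℝ → ℂ := fun n t => LSeries.term L ((2:ℝ) + t * I) n * g t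
  have hFn : ∀ n t, ‖F n t‖ = ‖LSeries.term L 2 n‖ * ‖g t‖ := by
    intro n t
    simp only [F]
    rw [norm_mul, LSeries.norm_term_eq, LSeries.norm_term_eq, hre]
    simp
  have hFc : ∀ n : ℕ, Continuous (fun t : ℝ => LSeries.term L ((2:ℝ) + t * I) n) := by
    intro n
    rcases Nat.eq_zero_or_pos n with h | h
    · subst h; simp only [LSeries.term_zero]; exact continuous_const
    · have hn : (n:ℂ) ≠ 0 := by exact_mod_cast h.ne'
      simp only [LSeries.term_of_ne_zero h.ne']
      refine Continuous.div continuous_const ?_ ?_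
      · exact Continuous.const_cpow (by fun_prop) (Or.inl hn)
      · intro t; rw [cpow_ne_zero_iff]; exact Or.inl hn
  have hFi : ∀ n, Integrable (F n) := by
    intro n
    refine Integrable.mono' (hg.norm.const_mul ‖LSeries.term L 2 n‖)
      ((hFc n).aestronglyMeasurable.mul hg.aestronglyMeasurable) (ae_of_all _ fun t => (hFn n t).le)
  have hsumm : Summable fun n => ‖LSeries.term L 2 n‖ := by
    have := ArithmeticFunction.LSeriesSummable_vonMangoldt (s := 2) (by norm_num)
    exact this.norm
  have hFs : Summable fun n => ∫ t, ‖F n t‖ := by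
    simp_rw [hFn, integral_const_mul]
    exact hsumm.mul_right _
  have hS := hasSum_integral_of_summable_integral_norm hFi hFs
  have hFint : ∀ n : ℕ, ∫ t, F n t = ((2 * Real.pi * (max (x - n) 0 * ArithmeticFunction.vonMangoldt n) : ℝ) : ℂ) := by
    intro n
    rcases Nat.eq_zero_or_pos n with h | h
    · subst h; simp [F, LSeries.term_zero]
    · have hn0 : (0:ℝ) < n := by exact_mod_cast h
      have hn : (n:ℂ) ≠ 0 := by exact_mod_cast h.ne'
      have hk := kern1 (σ := 2) (y := x / n) (by norm_num) (by positivity)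
      have e : ∀ t, F n t = (L n * x) * (((x / n : ℝ) : ℂ) ^ ((2:ℝ) + t * I : ℂ) / (((2:ℝ) + t * I) * ((2:ℝ) + t * I + 1))) := by
        intro t
        have hdc : ((x / n : ℝ) : ℂ) ^ ((2:ℝ) + t * I : ℂ) = (x : ℂ) ^ ((2:ℝ) + t * I : ℂ) / (n : ℂ) ^ ((2:ℝ) + t * I : ℂ) := by
          rw [ofReal_div, div_cpow_ofReal_nonneg hx0.le hn0.le, ofReal_natCast]
        simp only [F, g]
        rw [LSeries.term_of_ne_zero h.ne', cpow_add _ _ hxc, cpow_one, hdc]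
        ring
      simp_rw [e]
      rw [integral_const_mul, hk]
      have e2 : x * max (1 - (x / n)⁻¹) 0 = max (x - n) 0 := by
        rw [mul_max_of_nonneg _ _ hx0.le, mul_zero]
        congr 1
        field_simp
      rw [← e2]
      simp only [L]
      push_cast
      ring
  have hfin : HasSum (fun n : ℕ => ((2 * Real.pi * (max (x - n) 0 * ArithmeticFunction.vonMangoldt n) : ℝ) : ℂ))
      ((2 * Real.pi * chebyshevPsi1 x : ℝ) : ℂ) := by
    rw [psi1_eq hx, hasSum_ofReal, Finset.mul_sum]
    have : ∑ n ∈ Finset.Icc 0 ⌊x⌋₊, 2 * Real.pi * ((x - n) * ArithmeticFunction.vonMangoldt n) =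
        ∑ n ∈ Finset.Icc 0 ⌊x⌋₊, 2 * Real.pi * (max (x - n) 0 * ArithmeticFunction.vonMangoldt n) := by
      refine Finset.sum_congr rfl fun n hn => ?_
      rw [max_eq_left]
      have := (Nat.le_floor_iff hx0.le).mp (Finset.mem_Icc.mp hn).2
      linarith
    rw [this]
    refine hasSum_sum_of_ne_finset_zero fun n hn => ?_
    have : x < n := by
      by_contra! h
      exact hn (Finset.mem_Icc.mpr ⟨Nat.zero_le _, (Nat.le_floor_iff hx0.le).mpr h⟩)
    rw [max_eq_right (by linarith)]; simp
  simp_rw [hFint] at hS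
  have hmain := hS.unique hfin
  have hts : ∀ t : ℝ, ∑' n, F n t = (1 / ((2:ℝ) + t * I - 1)) * g t - logDeriv riemannZeta₁ ((2:ℝ) + t * I) * g t := by
    intro t
    simp only [F]
    rw [tsum_mul_right]
    have := logDeriv_Z (s := (2:ℝ) + t * I) (by rw [hre]; norm_num)
    unfold LSeries at this
    rw [this]; ring
  simp_rw [hts] at hmain
  obtain ⟨C, hC, hH⟩ := H_bounds hRH (σ := 1) (by norm_num) (by norm_num)
  have i2 : Integrable (fun t : ℝ => logDeriv riemannZeta₁ ((2:ℝ) + t * I) * g t) := by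
    have := Kg_integrable (K := logDeriv riemannZeta₁) (σ := 2) (x := x) (by norm_num) hx hC
      (fun s hs => (H_diffAt (Z_ne_zero hRH (by rw [← hs]; norm_num))).continuousAt)
      (fun s hs => (hH s (by rw [← hs]; norm_num)).1)
    simpa only [mul_div_assoc] using this
  have hne : ∀ s : ℂ, 2 = s.re → s - 1 ≠ 0 := by
    intro s hs h
    rw [sub_eq_zero.mp h] at hs; norm_num at hs
  have i1 : Integrable (fun t : ℝ => (1 / ((2:ℝ) + t * I - 1)) * g t) := by
    have := Kg_integrable (K := fun s => 1 / (s - 1)) (σ := 2) (C := 1) (x := x) (by norm_num) hx (by norm_num)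
      (fun s hs => ContinuousAt.div (by fun_prop) (by fun_prop) (hne s hs))
      (fun s hs => by
        have a := (le_abs_self _).trans (abs_re_le_norm (s - 1))
        have b := (le_abs_self _).trans (abs_re_le_norm s)
        rw [sub_re, one_re, ← hs] at a
        rw [← hs] at b
        have c : 1 ≤ ‖s‖ ^ (1/2:ℝ) := Real.one_le_rpow (by linarith) (by norm_num)
        rw [norm_div, norm_one, one_mul, div_le_iff₀ (by linarith)]
        nlinarith)
    simpa only [mul_div_assoc] using this
  rw [integral_sub i1 i2] at hmain
  have hk2 : ∫ t : ℝ, (1 / ((2:ℝ) + t * I - 1)) * g t = ((2 * Real.pi * ((x - 1) ^ 2 / 2) : ℝ) : ℂ) := by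
    have hk := kern2 (σ := 2) (by norm_num) hx0
    have e : ∀ t : ℝ, (1 / ((2:ℝ) + t * I - 1)) * g t =
      x * ((x:ℂ) ^ ((2:ℝ) + t * I : ℂ) / (((2:ℝ) + t * I - 1) * (((2:ℝ) + t * I) * ((2:ℝ) + t * I + 1)))) := by
      intro t
      simp only [g]
      rw [cpow_add _ _ hxc, cpow_one, div_mul_div_comm, one_mul, ← mul_div_assoc]
      ring
    simp_rw [e]
    rw [integral_const_mul, hk, max_eq_left (by rw [sub_nonneg]; exact inv_le_one_of_one_le₀ hx), ← ofReal_mul]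
    congr 1
    field_simp
  rw [hk2] at hmain
  have e3 : ∫ t : ℝ, logDeriv riemannZeta₁ ((2:ℝ) + t * I) * (x : ℂ) ^ (((2:ℝ) + t * I : ℂ) + 1) /
      (((2:ℝ) + t * I) * ((2:ℝ) + t * I + 1)) = ∫ t : ℝ, logDeriv riemannZeta₁ ((2:ℝ) + t * I) * g t := by
    simp only [g, mul_div_assoc]
  rw [e3]
  rw [mul_sub, ofReal_sub, ← hmain]
  ring


lemma H_two_le : (logDeriv riemannZeta₁ 2).re ≤ 1 := by
  have h := logDeriv_Z (s := 2) (by norm_num)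
  have hs := ArithmeticFunction.LSeriesSummable_vonMangoldt (s := 2) (by norm_num)
  have h0 : 0 ≤ (LSeries (fun n => (ArithmeticFunction.vonMangoldt n : ℂ)) 2).re := by
    unfold LSeries
    rw [Complex.re_tsum hs]
    refine tsum_nonneg fun n => ?_
    rcases Nat.eq_zero_or_pos n with hn | hn
    · subst hn; simp
    · rw [LSeries.term_of_ne_zero hn.ne']
      have e : ((ArithmeticFunction.vonMangoldt n : ℂ) / (n:ℂ) ^ (2:ℂ)) =
          ((ArithmeticFunction.vonMangoldt n / (n:ℝ) ^ 2 : ℝ) : ℂ) := by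
        push_cast
        congr 1
        exact_mod_cast cpow_natCast (n:ℂ) 2
      rw [e, ofReal_re]
      have := ArithmeticFunction.vonMangoldt_nonneg (n := n)
      positivity
  rw [h] at h0
  norm_num at h0
  exact h0

lemma shifted (hRH : ∀ s : ℂ, riemannZeta s = 0 → 0 < s.re → s.re < 1 → s.re = 1 / 2) {x : ℝ} (hx : 1 ≤ x)
    {σ : ℝ} (hσ : 1 / 2 < σ) (hσ1 : σ ≤ 1) :
    ∫ t : ℝ, logDeriv riemannZeta₁ (σ + t * I) * (x : ℂ) ^ ((σ + t * I : ℂ) + 1) /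
      ((σ + t * I) * (σ + t * I + 1)) =
    ((2 * Real.pi * ((x - 1) ^ 2 / 2 - chebyshevPsi1 x) : ℝ) : ℂ) := by
  have hx0 : 0 < x := by linarith
  have hxc : (x : ℂ) ≠ 0 := by exact_mod_cast hx0.ne'
  have hσ0 : 0 < σ := by linarith
  obtain ⟨C, hC, hH⟩ := H_bounds hRH hσ hσ1
  rw [← perron hRH hx]
  refine shift_line (f := fun s => logDeriv riemannZeta₁ s * (x : ℂ) ^ (s + 1) / (s * (s + 1)))
    (C := C * x ^ (3:ℝ)) hσ0 (by linarith) (fun s hs => ?_) (fun s hs hs2 => ?_)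
  · refine DifferentiableAt.div (DifferentiableAt.mul (H_diffAt (Z_ne_zero hRH (by linarith))) ?_) (by fun_prop) (div_ne hσ0 hs)
    exact DifferentiableAt.const_cpow (by fun_prop) (Or.inl hxc)
  · refine div_bound hσ0 hs (by positivity) ?_
    rw [norm_mul, norm_cpow_eq_rpow_re_of_pos hx0, add_re, one_re]
    have a := (hH s hs).1
    have b : x ^ (s.re + 1) ≤ x ^ (3:ℝ) := Real.rpow_le_rpow_of_exponent_le hx (by linarith)
    calc _ ≤ (C * ‖s‖ ^ (1/2:ℝ)) * x ^ (3:ℝ) := mul_le_mul a b (by positivity) (by positivity)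
      _ = _ := by ring

lemma ineq_sigma (hRH : ∀ s : ℂ, riemannZeta s = 0 → 0 < s.re → s.re < 1 → s.re = 1 / 2) {x : ℝ} (hx : 1 ≤ x)
    {σ : ℝ} (hσ : 1 / 2 < σ) (hσ1 : σ ≤ 1) :
    |((x - 1) ^ 2 / 2 - chebyshevPsi1 x) - c0 * (x - 1)
      + x * ((Gf (2 * σ : ℝ)).re - (Pf (2 * σ : ℝ)).re) - ((Gf (2 * σ + 1 : ℝ)).re - (Pf (2 * σ + 1 : ℝ)).re)|
      ≤ x ^ (σ + 1) * ((Gf (2 * σ : ℝ)).re + (Pf (2 * σ : ℝ)).re) / σ := by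
  have hσ0 : 0 < σ := by linarith
  obtain ⟨C, hC, hG⟩ := Gf_norm hRH hσ hσ1
  have tG := trick (K := Gf) hσ0 hx (fun s hs => Gf_diffAt hRH (by linarith)) hG (fun s hs => Gf_re hRH (by linarith))
  have tP := trick (K := Pf) hσ0 hx (fun s hs => Pf_diffAt (by linarith)) (fun s hs => Pf_norm (by linarith))
    (fun s hs => Pf_re (by linarith))
  have iG := Kg_integrable (K := Gf) hσ0 hx hC (fun s hs => (Gf_diffAt hRH (by linarith)).continuousAt) (fun s hs => hG s hs.le)
  have iP := Kg_integrable (K := Pf) hσ0 hx Kb_nonneg (fun s hs => (Pf_diffAt (by linarith)).continuousAt)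
    (fun s hs => Pf_norm (by linarith))
  have ig := (g_integrable hσ0 hx).const_mul (c0 : ℂ)
  have hsh := shifted hRH hx hσ hσ1
  have e : ∀ t : ℝ, logDeriv riemannZeta₁ (σ + t * I) * (x : ℂ) ^ ((σ + t * I : ℂ) + 1) /
      ((σ + t * I) * (σ + t * I + 1)) =
      Gf (σ + t * I) * (x : ℂ) ^ ((σ + t * I : ℂ) + 1) / ((σ + t * I) * (σ + t * I + 1)) -
      Pf (σ + t * I) * (x : ℂ) ^ ((σ + t * I : ℂ) + 1) / ((σ + t * I) * (σ + t * I + 1)) +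
      c0 * ((x : ℂ) ^ ((σ + t * I : ℂ) + 1) / ((σ + t * I) * (σ + t * I + 1))) := by
    intro t; unfold Gf; ring
  simp_rw [e] at hsh
  have lin : ∀ f g h : ℝ → ℂ, Integrable f → Integrable g → Integrable h →
      ∫ t, (f t - g t + h t) = (∫ t, f t) - (∫ t, g t) + ∫ t, h t := by
    intro f g h hf hg hh
    have hfg : Integrable (fun t => f t - g t) := hf.sub hg
    rw [integral_add hfg hh, integral_sub hf hg]
  rw [lin _ _ _ iG iP ig, integral_const_mul, g_int_eq hσ0 hx] at hsh
  have hr := congrArg re hsh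
  rw [add_re, sub_re, ← ofReal_mul, ofReal_re, ofReal_re] at hr
  generalize (∫ t : ℝ, Gf (σ + t * I) * (x : ℂ) ^ ((σ + t * I : ℂ) + 1) / ((σ + t * I) * (σ + t * I + 1))).re = A at *
  generalize (∫ t : ℝ, Pf (σ + t * I) * (x : ℂ) ^ ((σ + t * I : ℂ) + 1) / ((σ + t * I) * (σ + t * I + 1))).re = B at *
  have hpi := Real.pi_pos
  have hr2 : (x - 1) ^ 2 / 2 - chebyshevPsi1 x = A / (2 * Real.pi) - B / (2 * Real.pi) + c0 * (x - 1) := by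
    field_simp
    linarith
  rw [hr2, mul_add, add_div]
  rw [abs_le] at *
  constructor <;> linarith [tG.1, tG.2, tP.1, tP.2]

lemma ineq_half (hRH : ∀ s : ℂ, riemannZeta s = 0 → 0 < s.re → s.re < 1 → s.re = 1 / 2) {x : ℝ} (hx : 1 ≤ x) :
    |((x - 1) ^ 2 / 2 - chebyshevPsi1 x) - c0 * (x - 1)
      + x * ((Gf 1).re - (Pf 1).re) - ((Gf 2).re - (Pf 2).re)|
      ≤ x ^ ((3:ℝ) / 2) * (2 * ((Gf 1).re + (Pf 1).re)) := by
  have hx0 : 0 < x := by linarith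
  have cont : ∀ (K : ℂ → ℂ) (a : ℝ), ContinuousAt K ((1 + a : ℝ) : ℂ) →
      Tendsto (fun σ : ℝ => (K (2 * σ + a : ℝ)).re) (𝓝[>] (1/2)) (𝓝 (K ((1 + a : ℝ) : ℂ)).re) := by
    intro K a h
    have h1 : ContinuousAt (fun σ : ℝ => (K (2 * σ + a : ℝ)).re) (1/2) := by
      refine continuous_re.continuousAt.comp ?_
      refine ContinuousAt.comp (g := K) (f := fun σ : ℝ => ((2 * σ + a : ℝ) : ℂ)) ?_ (by fun_prop)
      convert h using 2
      norm_num
    have h2 := h1.tendsto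
    have e : (2 * (1/2) + a : ℝ) = 1 + a := by ring
    rw [e] at h2
    exact h2.mono_left nhdsWithin_le_nhds
  have g1 := cont Gf 0 (Gf_diffAt hRH (by norm_num)).continuousAt
  have g2 := cont Gf 1 (Gf_diffAt hRH (by norm_num)).continuousAt
  have p1 := cont Pf 0 (Pf_diffAt (by norm_num)).continuousAt
  have p2 := cont Pf 1 (Pf_diffAt (by norm_num)).continuousAt
  simp only [add_zero, ofReal_one] at g1 p1
  rw [show (((1 + 1 : ℝ) : ℝ) : ℂ) = 2 by norm_num] at g2 p2
  have hσt : Tendsto (fun σ : ℝ => σ) (𝓝[>] (1/2)) (𝓝 (1/2)) := tendsto_id.mono_left nhdsWithin_le_nhds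
  have hxt : Tendsto (fun σ : ℝ => x ^ (σ + 1)) (𝓝[>] (1/2)) (𝓝 (x ^ ((1/2 : ℝ) + 1))) := by
    exact ((Real.continuous_const_rpow hx0.ne').tendsto _).comp (hσt.add_const 1)
  have hL := (((g1.sub p1).const_mul x).const_add (((x - 1) ^ 2 / 2 - chebyshevPsi1 x) - c0 * (x - 1))).sub (g2.sub p2)
  have hR := (hxt.mul (g1.add p1)).div hσt (by norm_num)
  have := le_of_tendsto_of_tendsto hL.abs hR (by
    have : Set.Ioo (1/2:ℝ) 1 ∈ 𝓝[>] (1/2:ℝ) := Ioo_mem_nhdsGT (by norm_num)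
    filter_upwards [this] with σ hσ
    exact ineq_sigma hRH hx hσ.1 hσ.2.le)
  refine this.trans (le_of_eq ?_)
  rw [show (1/2 : ℝ) + 1 = 3/2 by norm_num]
  ring

lemma main_bound (hRH : ∀ s : ℂ, riemannZeta s = 0 → 0 < s.re → s.re < 1 → s.re = 1 / 2) {x : ℝ} (hx : 1 ≤ x) :
    |chebyshevPsi1 x - x ^ 2 / 2| ≤ (3 + Real.eulerMascheroniConstant) * x ^ ((3:ℝ) / 2) := by
  have h := ineq_half hRH hx
  have hH := H_two_le
  have hG2 := Gf_re hRH (s := 2) (by norm_num)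
  have eG2 : (Gf 2).re = (logDeriv riemannZeta₁ 2).re + 1 / 2 - c0 := by
    unfold Gf; rw [Pf_two, sub_re, add_re, ofReal_re]; norm_num
  have eP2 : (Pf 2).re = 1 / 2 := by rw [Pf_two]; norm_num
  rw [eG2] at hG2
  rw [Gf_one, Pf_one, eG2, eP2, ofReal_re, ofReal_re] at h
  generalize (logDeriv riemannZeta₁ 2).re = H2 at *
  have hx32 : x ≤ x ^ ((3:ℝ)/2) := by
    nth_rewrite 1 [← Real.rpow_one x]
    exact Real.rpow_le_rpow_of_exponent_le hx (by norm_num)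
  have hl2 := Real.log_two_gt_d9
  have hγ := Real.eulerMascheroniConstant_lt_two_thirds
  have hγ2 := Real.one_half_lt_eulerMascheroniConstant
  have hlp : 0 < Real.log Real.pi := Real.log_pos (by linarith [Real.pi_gt_three])
  have hc : 2 * c0 = Real.eulerMascheroniConstant + Real.log Real.pi := by unfold c0; ring
  generalize Real.log Real.pi = lp at *
  generalize Real.eulerMascheroniConstant = γ at *
  generalize c0 = c at *
  generalize Real.log 2 = l2 at *
  generalize x ^ ((3:ℝ)/2) = X at *
  have hlin : (1 + lp) * x ≤ (1 + lp) * X := mul_le_mul_of_nonneg_left hx32 (by linarith)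
  have hk : lp ≤ lp * x := le_mul_of_one_le_right hlp.le hx
  have hl2X : l2 * X ≥ (1/2) * X := mul_le_mul_of_nonneg_right (by linarith) (by linarith)
  have hcX : 2 * c * X = γ * X + lp * X := by rw [hc]; ring
  have hcx : 2 * c * x = γ * x + lp * x := by rw [hc]; ring
  rw [abs_le] at h ⊢
  constructor
  · nlinarith [h.1, h.2]
  · nlinarith [h.1, h.2]


end

theorem psi1_bound_of_rh (hRH : RH) :
    ∀ x : ℝ, 1 ≤ x →
      |chebyshevPsi1 x - x ^ 2 / 2| ≤ (4 + Real.eulerMascheroniConstant) * x ^ ((3 : ℝ) / 2) ∧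
      |chebyshevPsi1 x - x ^ 2 / 2| < 5 * x ^ ((3 : ℝ) / 2) := by
  intro x hx
  have h := main_bound hRH hx
  have hpos : (0:ℝ) < x ^ ((3 : ℝ) / 2) := Real.rpow_pos_of_pos (by linarith) _
  have hγ := Real.eulerMascheroniConstant_lt_two_thirds
  constructor
  · exact h.trans (mul_le_mul_of_nonneg_right (by linarith) hpos.le)
  · exact h.trans_lt (mul_lt_mul_of_pos_right (by linarith) hpos)
end

section
/- If |ψ₁(x) − x²/2| ≤ 9·x^{3/2} for all real x ≥ 1, then the Riemann zeta function has no zeros s with 1/2 < Re s < 1; consequently, the Riemann hypothesis holds. -/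
open Filter Topology Set MeasureTheory

namespace RHaux

lemma psi_eq (x : ℝ) : chebyshevPsi x = Chebyshev.psi x := by
  rw [chebyshevPsi, Chebyshev.psi]
  rfl

lemma psi_mono : Monotone chebyshevPsi := by
  have : chebyshevPsi = Chebyshev.psi := funext psi_eq
  rw [this]
  exact Chebyshev.psi_mono

lemma psi_intervalIntegrable (a b : ℝ) : IntervalIntegrable chebyshevPsi volume a b :=
  psi_mono.intervalIntegrable

lemma psi_le {x : ℝ} (hx : 0 ≤ x) : |chebyshevPsi x| ≤ (Real.log 4 + 4) * x := by
  rw [psi_eq, abs_of_nonneg (Chebyshev.psi_nonneg x)]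
  exact Chebyshev.psi_le_const_mul_self hx

lemma psi_right_cont {x : ℝ} (hx : 0 ≤ x) : ContinuousWithinAt chebyshevPsi (Ioi x) x := by
  have hev : chebyshevPsi =ᶠ[𝓝[>] x] fun _ => chebyshevPsi x := by
    have : Ioo x (⌊x⌋₊ + 1 : ℝ) ∈ 𝓝[>] x := Ioo_mem_nhdsGT (Nat.lt_floor_add_one x)
    filter_upwards [this] with y hy
    have : ⌊y⌋₊ = ⌊x⌋₊ := by
      rw [Nat.floor_eq_iff (hx.trans hy.1.le)]
      exact ⟨(Nat.floor_le hx).trans hy.1.le, hy.2⟩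
    simp [chebyshevPsi, this]
  exact tendsto_const_nhds.congr' hev.symm

lemma psi1_cont : Continuous chebyshevPsi1 :=
  intervalIntegral.continuous_primitive (fun a b => psi_intervalIntegrable a b) 1

lemma psi1_deriv {x : ℝ} (hx : 0 ≤ x) :
    HasDerivWithinAt chebyshevPsi1 (chebyshevPsi x) (Ioi x) x := by
  have := intervalIntegral.integral_hasDerivWithinAt_right (psi_intervalIntegrable 1 x)
    (s := Ici x) (t := Ioi x) (psi_mono.measurable.stronglyMeasurable.stronglyMeasurableAtFilter)
    (psi_right_cont hx)
  exact this.mono Ioi_subset_Ici_self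

lemma growth_integrable {f : ℝ → ℝ} (hf : Measurable f) {C a : ℝ} {z : ℂ}
    (hb : ∀ t, 1 ≤ t → |f t| ≤ C * t ^ a) (hz : a + z.re < -1) :
    IntegrableOn (fun t : ℝ => (f t : ℂ) * (t : ℂ) ^ z) (Ioi 1) := by
  have h1 : IntegrableOn (fun t : ℝ => C * t ^ (a + z.re)) (Ioi 1) :=
    (integrableOn_Ioi_rpow_of_lt hz one_pos).const_mul C
  refine Integrable.mono' h1 ?_ ?_
  · exact ((Complex.measurable_ofReal.comp hf).mul
      (Complex.measurable_ofReal.pow_const z)).aestronglyMeasurable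
  · filter_upwards [ae_restrict_mem measurableSet_Ioi] with t ht
    have ht : (1:ℝ) < t := ht
    have ht0 : 0 < t := by linarith
    rw [norm_mul, Complex.norm_real, Real.norm_eq_abs,
      Complex.norm_cpow_eq_rpow_re_of_pos ht0, Real.rpow_add ht0, ← mul_assoc]
    exact mul_le_mul_of_nonneg_right (hb t ht.le) (by positivity)

lemma psi1_le (h : ∀ x : ℝ, 1 ≤ x → |chebyshevPsi1 x - x ^ 2 / 2| ≤ 9 * x ^ ((3 : ℝ) / 2))
    {t : ℝ} (ht : 1 ≤ t) : |chebyshevPsi1 t| ≤ 10 * t ^ (2:ℝ) := by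
  have h1 := h t ht
  have h2 : t ^ ((3:ℝ)/2) ≤ t ^ (2:ℝ) := Real.rpow_le_rpow_of_exponent_le ht (by norm_num)
  have h3 : t ^ (2:ℝ) = t ^ 2 := by norm_cast
  have h4 : 0 ≤ t ^ 2 := by positivity
  rw [h3] at h2 ⊢
  generalize t ^ ((3:ℝ)/2) = a at h1 h2
  rw [abs_le] at h1 ⊢
  obtain ⟨h5, h6⟩ := h1
  constructor <;> linarith

lemma parts (h : ∀ x : ℝ, 1 ≤ x → |chebyshevPsi1 x - x ^ 2 / 2| ≤ 9 * x ^ ((3 : ℝ) / 2))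
    {s : ℂ} (hs : 1 < s.re) :
    ∫ t in Ioi (1:ℝ), (chebyshevPsi t : ℂ) * (t : ℂ) ^ (-(s + 1)) =
      (s + 1) * ∫ t in Ioi (1:ℝ), (chebyshevPsi1 t : ℂ) * (t : ℂ) ^ (-(s + 2)) := by
  have i1 : IntegrableOn (fun t : ℝ => (chebyshevPsi t : ℂ) * (t : ℂ) ^ (-(s + 1))) (Ioi 1) := by
    refine growth_integrable psi_mono.measurable (C := Real.log 4 + 4) (a := 1) ?_ ?_
    · intro t ht
      rw [Real.rpow_one]
      exact psi_le (by linarith)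
    · simp; linarith
  have i2 : IntegrableOn (fun t : ℝ => (chebyshevPsi1 t : ℂ) * (t : ℂ) ^ (-(s + 2))) (Ioi 1) := by
    refine growth_integrable psi1_cont.measurable (C := 10) (a := 2) (fun t ht => psi1_le h ht) ?_
    simp; linarith
  have l1 := intervalIntegral_tendsto_integral_Ioi 1 i1 tendsto_id
  have l2 := intervalIntegral_tendsto_integral_Ioi 1 i2 tendsto_id
  have lb : Tendsto (fun X : ℝ => (chebyshevPsi1 X : ℂ) * (X : ℂ) ^ (-(s + 1))) atTop (𝓝 0) := by
    have hz : Tendsto (fun X : ℝ => 10 * X ^ (-(s.re - 1))) atTop (𝓝 0) := by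
      simpa using (tendsto_rpow_neg_atTop (y := s.re - 1) (by linarith)).const_mul 10
    refine squeeze_zero_norm' ?_ hz
    filter_upwards [eventually_ge_atTop 1] with t ht
    have ht0 : 0 < t := by linarith
    rw [norm_mul, Complex.norm_real, Real.norm_eq_abs,
      Complex.norm_cpow_eq_rpow_re_of_pos ht0,
      show -(s.re - 1) = 2 + (-(s + 1)).re by simp; ring, Real.rpow_add ht0, ← mul_assoc]
    exact mul_le_mul_of_nonneg_right (psi1_le h ht) (by positivity)
  have key : ∀ X : ℝ, 1 ≤ X →
      ∫ t in (1:ℝ)..X, (chebyshevPsi t : ℂ) * (t : ℂ) ^ (-(s + 1)) =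
      (chebyshevPsi1 X : ℂ) * (X : ℂ) ^ (-(s + 1)) +
      (s + 1) * ∫ t in (1:ℝ)..X, (chebyshevPsi1 t : ℂ) * (t : ℂ) ^ (-(s + 2)) := by
    intro X hX
    have hpos : ∀ x ∈ uIcc 1 X, 0 < x := by
      intro x hx
      rw [uIcc_of_le hX] at hx
      linarith [hx.1]
    have hcont : ∀ z : ℂ, ContinuousOn (fun t : ℝ => (t : ℂ) ^ z) (uIcc 1 X) := by
      intro z x hx
      exact (Complex.continuousAt_ofReal_cpow_const _ _
        (Or.inr (hpos x hx).ne')).continuousWithinAt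
    have := intervalIntegral.integral_mul_deriv_eq_deriv_mul_of_hasDeriv_right
      (a := 1) (b := X)
      (u := fun t : ℝ => (chebyshevPsi1 t : ℂ)) (u' := fun t : ℝ => (chebyshevPsi t : ℂ))
      (v := fun t : ℝ => (t : ℂ) ^ (-(s + 1)))
      (v' := fun t : ℝ => (-(s + 1)) * (t : ℂ) ^ (-(s + 2)))
      (Complex.continuous_ofReal.comp psi1_cont).continuousOn (hcont _)
      ?_ ?_ ?_ ?_
    · have e : ∀ t : ℝ, (chebyshevPsi1 t : ℂ) * ((-(s + 1)) * (t : ℂ) ^ (-(s + 2))) =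
          (-(s+1)) * ((chebyshevPsi1 t : ℂ) * (t : ℂ) ^ (-(s + 2))) := fun t => by ring
      simp only [e, intervalIntegral.integral_const_mul] at this
      have h1 : chebyshevPsi1 1 = 0 := by simp [chebyshevPsi1]
      rw [h1] at this
      simp only [Complex.ofReal_zero, zero_mul, sub_zero] at this
      linear_combination this
    · intro x hx
      rw [min_eq_left hX] at hx
      exact (psi1_deriv (by linarith [hx.1])).ofReal_comp
    · intro x hx
      rw [min_eq_left hX] at hx
      have hx0 : x ≠ 0 := by linarith [hx.1]
      have hne : -(s + 1) ≠ 0 := by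
        intro h0
        have := congrArg Complex.re h0
        simp at this
        linarith
      have := hasDerivAt_ofReal_cpow_const' (x := x) hx0 (r := -(s+2)) (by
        intro h0
        have := congrArg Complex.re h0
        simp at this
        linarith)
      have h2 := this.const_mul (-(s+1))
      have e : (fun y : ℝ => -(s+1) * ((y:ℂ) ^ (-(s+2) + 1) / (-(s+2)+1))) =
          fun t : ℝ => (t : ℂ) ^ (-(s + 1)) := by
        funext y
        rw [show -(s+2)+1 = -(s+1) by ring]
        exact mul_div_cancel₀ _ hne
      rw [e] at h2
      exact h2.hasDerivWithinAt
    · exact ⟨(psi_intervalIntegrable 1 X).1.ofReal, (psi_intervalIntegrable 1 X).2.ofReal⟩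
    · exact ((hcont _).const_mul _).intervalIntegrable
  have l3 := lb.add (l2.const_mul (s+1))
  rw [zero_add] at l3
  refine tendsto_nhds_unique l1 (l3.congr' ?_)
  filter_upwards [eventually_ge_atTop 1] with X hX
  exact (key X hX).symm

/-- The remainder, cut off to `(1, ∞)`. -/
noncomputable def R : ℝ → ℂ :=
  (Ioi (1:ℝ)).indicator fun t => ((chebyshevPsi1 t - t ^ 2 / 2 : ℝ) : ℂ)

lemma R_diff (h : ∀ x : ℝ, 1 ≤ x → |chebyshevPsi1 x - x ^ 2 / 2| ≤ 9 * x ^ ((3 : ℝ) / 2))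
    {s : ℂ} (hs : 1 / 2 < s.re) : DifferentiableAt ℂ (fun s => mellin R (-s - 1)) s := by
  have : DifferentiableAt ℂ (mellin R) (-s - 1) := by
    refine mellin_differentiableAt_of_isBigO_rpow (a := -3/2) (b := -s.re - 2) ?_ ?_ ?_ ?_ ?_
    · have hc : Continuous fun t : ℝ => ((chebyshevPsi1 t - t ^ 2 / 2 : ℝ) : ℂ) :=
        Complex.continuous_ofReal.comp (psi1_cont.sub (by fun_prop))
      exact (hc.locallyIntegrable.indicator measurableSet_Ioi).locallyIntegrableOn _
    · refine Asymptotics.IsBigO.of_bound 9 ?_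
      filter_upwards [eventually_gt_atTop 1] with t ht
      have h1 := h t ht.le
      have : R t = ((chebyshevPsi1 t - t ^ 2 / 2 : ℝ) : ℂ) := indicator_of_mem ht _
      rw [this, Complex.norm_real, Real.norm_eq_abs, Real.norm_eq_abs,
        abs_of_nonneg (a := t ^ _) (Real.rpow_nonneg (by linarith) _)]
      convert h1 using 3
      norm_num
    · simp; linarith
    · refine Asymptotics.IsBigO.of_bound 1 ?_
      have : Ioo (0:ℝ) 1 ∈ 𝓝[>] (0:ℝ) := Ioo_mem_nhdsGT one_pos
      filter_upwards [this] with t ht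
      have : R t = 0 := indicator_of_notMem (by simpa using ht.2.le) _
      rw [this]
      simp
    · simp
  exact this.comp s (f := fun s : ℂ => -s - 1) (by fun_prop)

lemma formula (h : ∀ x : ℝ, 1 ≤ x → |chebyshevPsi1 x - x ^ 2 / 2| ≤ 9 * x ^ ((3 : ℝ) / 2))
    {s : ℂ} (hs : 1 < s.re) :
    (s - 1) * deriv riemannZeta s =
      -(s * (s + 1) * ((s - 1) * mellin R (-s - 1) + 1 / 2)) * riemannZeta s := by
  have hL := ArithmeticFunction.LSeries_vonMangoldt_eq_deriv_riemannZeta_div hs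
  have hO : (fun n : ℕ => ∑ k ∈ Finset.Icc 1 n, ArithmeticFunction.vonMangoldt k) =O[atTop]
      fun n => (n : ℝ) ^ (1:ℝ) := by
    refine Asymptotics.IsBigO.of_bound (Real.log 4 + 4) (Eventually.of_forall fun n => ?_)
    have := psi_le (x := n) (Nat.cast_nonneg n)
    rw [chebyshevPsi, Nat.floor_natCast] at this
    simpa using this
  have hI := LSeries_eq_mul_integral_of_nonneg (fun n => ArithmeticFunction.vonMangoldt n)
    zero_le_one hs hO (fun n => ArithmeticFunction.vonMangoldt_nonneg)
  have hP := parts h hs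
  have e1 : ∀ t : ℝ, ∑ k ∈ Finset.Icc 1 ⌊t⌋₊, (ArithmeticFunction.vonMangoldt k : ℂ) =
      (chebyshevPsi t : ℂ) := fun t => by simp [chebyshevPsi]
  simp only [e1] at hI
  rw [hP] at hI
  have i2 : IntegrableOn (fun t : ℝ => (chebyshevPsi1 t : ℂ) * (t : ℂ) ^ (-(s + 2))) (Ioi 1) := by
    refine growth_integrable psi1_cont.measurable (C := 10) (a := 2) (fun t ht => psi1_le h ht) ?_
    simp; linarith
  have i3 : IntegrableOn (fun t : ℝ => (1 / 2 : ℂ) * (t : ℂ) ^ (-s)) (Ioi 1) :=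
    (integrableOn_Ioi_cpow_of_lt (by simpa using hs) one_pos).const_mul _
  have hne : s - 1 ≠ 0 := by
    intro h0
    have := congrArg Complex.re h0
    simp at this
    linarith
  have hM : mellin R (-s - 1) =
      (∫ t in Ioi (1:ℝ), (chebyshevPsi1 t : ℂ) * (t : ℂ) ^ (-(s + 2))) - 1 / (2 * (s - 1)) := by
    have e2 : (1 / (2 * (s - 1)) : ℂ) = ∫ t in Ioi (1:ℝ), (1 / 2 : ℂ) * (t : ℂ) ^ (-s) := by
      rw [integral_const_mul, integral_Ioi_cpow_of_lt (by simpa using hs) one_pos]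
      have : -s + 1 ≠ 0 := by
        intro h0
        exact hne (by linear_combination -h0)
      simp only [Complex.ofReal_one, Complex.one_cpow]
      rw [show -s + 1 = -(s - 1) by ring]
      field_simp
    rw [e2, ← integral_sub i2 i3, mellin]
    have e3 : (fun t : ℝ => (t : ℂ) ^ (-s - 1 - 1) • R t) = (Ioi (1:ℝ)).indicator
        fun t => (t : ℂ) ^ (-s - 1 - 1) • ((chebyshevPsi1 t - t ^ 2 / 2 : ℝ) : ℂ) := by
      funext t
      by_cases ht : t ∈ Ioi (1:ℝ) <;> simp [R, ht]
    rw [e3, setIntegral_indicator measurableSet_Ioi,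
      show Ioi (0:ℝ) ∩ Ioi 1 = Ioi 1 by rw [Ioi_inter_Ioi]; simp]
    refine setIntegral_congr_fun measurableSet_Ioi fun t ht => ?_
    have ht : (1:ℝ) < t := ht
    have ht0 : (t : ℂ) ≠ 0 := by
      exact_mod_cast (by linarith : t ≠ 0)
    have e4 : (t : ℂ) ^ (-s) = (t : ℂ) ^ (-(s + 2)) * (t : ℂ) ^ 2 := by
      rw [← Complex.cpow_ofNat, ← Complex.cpow_add _ _ ht0]
      congr 1
      ring
    simp only [smul_eq_mul]
    rw [e4, show -s - 1 - 1 = -(s + 2) by ring]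
    push_cast
    ring
  have hz := riemannZeta_ne_zero_of_one_lt_re hs
  have hI2 : - deriv riemannZeta s / riemannZeta s = s * ((s + 1) *
      ∫ t in Ioi (1:ℝ), (chebyshevPsi1 t : ℂ) * (t : ℂ) ^ (-(s + 2))) := hL.symm.trans hI
  rw [div_eq_iff hz] at hI2
  have hM2 : (s - 1) * mellin R (-s - 1) + 1 / 2 = (s - 1) *
      ∫ t in Ioi (1:ℝ), (chebyshevPsi1 t : ℂ) * (t : ℂ) ^ (-(s + 2)) := by
    rw [hM]
    field_simp
    ring
  rw [hM2]
  linear_combination -(s - 1) * hI2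

/-- A domain joining the half-plane of convergence to the strip while avoiding `1`. -/
def U : Set ℂ :=
  ({s | 1 < s.re} ∪ ({s | 1 / 2 < s.re} ∩ {s | 0 < s.im})) ∪ ({s | 1 / 2 < s.re} ∩ {s | s.re < 1})

lemma U_open : IsOpen U := by
  have h1 : ∀ c : ℝ, IsOpen {s : ℂ | c < s.re} :=
    fun c => isOpen_lt continuous_const Complex.continuous_re
  have h2 : IsOpen {s : ℂ | 0 < s.im} := isOpen_lt continuous_const Complex.continuous_im
  have h3 : IsOpen {s : ℂ | s.re < 1} := isOpen_lt Complex.continuous_re continuous_const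
  exact ((h1 1).union ((h1 _).inter h2)).union ((h1 _).inter h3)

lemma U_conn : IsPreconnected U := by
  have c1 : IsPreconnected {s : ℂ | 1 < s.re} := (convex_halfSpace_re_gt 1).isPreconnected
  have c2 : IsPreconnected ({s : ℂ | 1 / 2 < s.re} ∩ {s | 0 < s.im}) :=
    ((convex_halfSpace_re_gt _).inter (convex_halfSpace_im_gt 0)).isPreconnected
  have c3 : IsPreconnected ({s : ℂ | 1 / 2 < s.re} ∩ {s | s.re < 1}) :=
    ((convex_halfSpace_re_gt _).inter (convex_halfSpace_re_lt 1)).isPreconnected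
  refine IsPreconnected.union (⟨3 / 4, 1⟩ : ℂ) ?_ ?_
    (IsPreconnected.union (⟨2, 1⟩ : ℂ) ?_ ?_ c1 c2) c3
  · right; constructor <;> simp; norm_num
  · constructor <;> simp <;> norm_num
  · simp
  · constructor <;> simp; norm_num

lemma U_re {s : ℂ} (hs : s ∈ U) : 1 / 2 < s.re := by
  rcases hs with (hs | hs) | hs
  · have : 1 < s.re := hs
    linarith
  · exact hs.1
  · exact hs.1

lemma U_ne {s : ℂ} (hs : s ∈ U) : s ≠ 1 := by
  rintro rfl
  simp [U] at hs

lemma no_zero (h : ∀ x : ℝ, 1 ≤ x → |chebyshevPsi1 x - x ^ 2 / 2| ≤ 9 * x ^ ((3 : ℝ) / 2))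
    (s : ℂ) (hs : 1 / 2 < s.re) (hs1 : s.re < 1) : riemannZeta s ≠ 0 := by
  intro hz
  have hsU : s ∈ U := Or.inr ⟨hs, hs1⟩
  have za : AnalyticOnNhd ℂ riemannZeta U :=
    DifferentiableOn.analyticOnNhd
      (fun z hz => (differentiableAt_riemannZeta (U_ne hz)).differentiableWithinAt) U_open
  have Ha : AnalyticOnNhd ℂ
      (fun s : ℂ => -(s * (s + 1) * ((s - 1) * mellin R (-s - 1) + 1 / 2))) U := by
    refine DifferentiableOn.analyticOnNhd (fun z hz => ?_) U_open
    have := R_diff h (U_re hz)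
    exact DifferentiableAt.differentiableWithinAt (by fun_prop)
  have ha : AnalyticOnNhd ℂ (fun s : ℂ => s - 1) U := fun z _ => by fun_prop
  have hEq := (ha.mul za.deriv).eqOn_of_preconnected_of_eventuallyEq (Ha.mul za) U_conn
    (z₀ := 2) (Or.inl (Or.inl (by simp))) (by
      have : {s : ℂ | 1 < s.re} ∈ 𝓝 (2:ℂ) :=
        (isOpen_lt continuous_const Complex.continuous_re).mem_nhds (by simp)
      filter_upwards [this] with z hz
      exact formula h hz)
  have hev := (hEq.eventuallyEq_of_mem (U_open.mem_nhds hsU))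
  have ho : analyticOrderAt ((fun s : ℂ => s - 1) * deriv riemannZeta) s =
      analyticOrderAt ((fun s : ℂ => -(s * (s + 1) * ((s - 1) * mellin R (-s - 1) + 1 / 2))) *
        riemannZeta) s := analyticOrderAt_congr hev
  rw [analyticOrderAt_mul (ha s hsU) (za.deriv s hsU),
    analyticOrderAt_mul (Ha s hsU) (za s hsU)] at ho
  have h0 : analyticOrderAt (fun s : ℂ => s - 1) s = 0 :=
    (ha s hsU).analyticOrderAt_eq_zero.2 (sub_ne_zero.2 (U_ne hsU))
  have hd := (za s hsU).analyticOrderAt_deriv_add_one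
  simp only [hz, sub_zero] at hd
  rw [h0, zero_add] at ho
  have htop : analyticOrderAt riemannZeta s = ⊤ := by
    by_contra hne
    have hle : analyticOrderAt riemannZeta s ≤ analyticOrderAt (deriv riemannZeta) s := by
      rw [ho]; exact le_add_self
    have hne2 : analyticOrderAt (deriv riemannZeta) s ≠ ⊤ := by
      intro ht
      rw [ht] at hd
      exact hne (by simpa using hd.symm)
    have hd' : analyticOrderAt (deriv riemannZeta) s + 1 ≤ analyticOrderAt (deriv riemannZeta) s :=
      hd.le.trans hle
    exact (ENat.add_one_le_iff hne2).1 hd' |>.false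
  rw [analyticOrderAt_eq_top] at htop
  have := za.eqOn_zero_of_preconnected_of_eventuallyEq_zero U_conn hsU htop
    (show (2:ℂ) ∈ U from Or.inl (Or.inl (by simp)))
  exact riemannZeta_ne_zero_of_one_lt_re (s := 2) (by simp) this

end RHaux

theorem rh_of_psi1_bound
    (h : ∀ x : ℝ, 1 ≤ x → |chebyshevPsi1 x - x ^ 2 / 2| ≤ 9 * x ^ ((3 : ℝ) / 2)) :
    (∀ s : ℂ, 1 / 2 < s.re → s.re < 1 → riemannZeta s ≠ 0) ∧ RH := by
  refine ⟨RHaux.no_zero h, fun s hz h0 h1 => ?_⟩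
  rcases lt_trichotomy s.re (1 / 2) with hlt | heq | hgt
  · exfalso
    refine RHaux.no_zero h (1 - s) (by simp; linarith) (by simpa using h0) ?_
    rw [riemannZeta_one_sub, hz, mul_zero]
    · rintro n rfl
      simp at h0
      have : (0:ℝ) ≤ n := Nat.cast_nonneg n
      linarith
    · rintro rfl
      simp at h1
  · exact heq
  · exact absurd hz (RHaux.no_zero h s hgt h1)
end
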